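/- arXiv:1002.2762 — 2 statements merged into one kernel-verified Lean document; each statement's English description precedes it below -/
import Mathlib

section
/- For every integer n ≥ 1 the quantized cluster variables q-commute: B[n,0,0,n−1]·B[n+1,0,0,n] = q² · B[n+1,0,0,n]·B[n,0,0,n−1]. -/
noncomputable section

abbrev F : Type := RatFunc ℚ

/-- The deformation parameter `q`. -/
def qq : F := RatFunc.X

/-- The quantum integer `[3] = q² + 1 + q⁻²`. -/
def box3 : F := qq ^ 2 + 1 + (qq⁻¹) ^ 2

/-- The generators `E₁, E₂` of the free algebra. -/
def gen (i : Fin 2) : FreeAlgebra F (Fin 2) := FreeAlgebra.ι F i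

/-- The quantized Serre relations. -/
inductive SerreRel : FreeAlgebra F (Fin 2) → FreeAlgebra F (Fin 2) → Prop
  | rel1 : SerreRel
      (gen 0 ^ 3 * gen 1 - box3 • (gen 0 ^ 2 * gen 1 * gen 0)
        + box3 • (gen 0 * gen 1 * gen 0 ^ 2) - gen 1 * gen 0 ^ 3) 0
  | rel2 : SerreRel
      (gen 1 ^ 3 * gen 0 - box3 • (gen 1 ^ 2 * gen 0 * gen 1)
        + box3 • (gen 1 * gen 0 * gen 1 ^ 2) - gen 0 * gen 1 ^ 3) 0

/-- `U = U_q(𝔫)`, the free algebra on `E₁, E₂` modulo the quantized Serre relations. -/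
abbrev U : Type := RingQuot SerreRel

def E1 : U := RingQuot.mkAlgHom F SerreRel (gen 0)
def E2 : U := RingQuot.mkAlgHom F SerreRel (gen 1)

/-- `A = (1/(q+q⁻¹))(E₂E₁ − q⁻²E₁E₂)`. -/
def Aelt : U := (qq + qq⁻¹)⁻¹ • (E2 * E1 - (qq⁻¹) ^ 2 • (E1 * E2))

def v0 : U := E1
def v1 : U := Aelt * v0 - v0 * Aelt
def v2 : U := Aelt * v1 - v1 * Aelt
def v3 : U := Aelt * v2 - v2 * Aelt

/-- `uᵢ = (1 − q⁻²)⁻²ⁱ vᵢ`. -/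
def u0 : U := v0
def u1 : U := ((1 - (qq⁻¹) ^ 2)⁻¹) ^ 2 • v1
def u2 : U := ((1 - (qq⁻¹) ^ 2)⁻¹) ^ 4 • v2
def u3 : U := ((1 - (qq⁻¹) ^ 2)⁻¹) ^ 6 • v3

/-- `p₁ = u₃u₁ − q²u₂²`. -/
def p1 : U := u3 * u1 - qq ^ 2 • u2 ^ 2
/-- `p₀ = u₂u₀ − q²u₁²`. -/
def p0 : U := u2 * u0 - qq ^ 2 • u1 ^ 2

/-- `S`, the subalgebra of `U` generated by `u₀, u₁, u₂, u₃`. -/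
abbrev Sgen : Subalgebra F U := Algebra.adjoin F ({u0, u1, u2, u3} : Set U)

def us0 : Sgen := ⟨u0, Algebra.subset_adjoin (by simp)⟩
def us1 : Sgen := ⟨u1, Algebra.subset_adjoin (by simp)⟩
def us2 : Sgen := ⟨u2, Algebra.subset_adjoin (by simp)⟩
def us3 : Sgen := ⟨u3, Algebra.subset_adjoin (by simp)⟩

/-- `p₁ = u₃u₁ − q²u₂²` as an element of `S`. -/
def ps1 : Sgen := us3 * us1 - qq ^ 2 • us2 ^ 2
/-- `p₀ = u₂u₀ − q²u₁²` as an element of `S`. -/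
def ps0 : Sgen := us2 * us0 - qq ^ 2 • us1 ^ 2

/-- Index quadruples `a = (a₃, a₂, a₁, a₀)`. -/
abbrev Idx : Type := ℕ × ℕ × ℕ × ℕ

/-- The PBW monomial `u₃^{a₃}u₂^{a₂}u₁^{a₁}u₀^{a₀}`. -/
def mon (a : Idx) : Sgen := us3 ^ a.1 * us2 ^ a.2.1 * us1 ^ a.2.2.1 * us0 ^ a.2.2.2

/-- `b(a) = C(a₃,2)+C(a₂,2)+C(a₁,2)+C(a₀,2)`. -/
def bexp (a : Idx) : ℕ :=
  Nat.choose a.1 2 + Nat.choose a.2.1 2 + Nat.choose a.2.2.1 2 + Nat.choose a.2.2.2 2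

/-- The dual PBW basis element `E[a] = q^{b(a)} u₃^{a₃}u₂^{a₂}u₁^{a₁}u₀^{a₀}`. -/
def Ee (a : Idx) : Sgen := qq ^ bexp a • mon a

/-- `N(a) = (a₃+a₂+a₁+a₀)² − 7a₃ − 5a₂ − 3a₁ − a₀`. -/
def Nnum (a : Idx) : ℤ :=
  ((a.1 : ℤ) + a.2.1 + a.2.2.1 + a.2.2.2) ^ 2
    - 7 * a.1 - 5 * a.2.1 - 3 * a.2.2.1 - a.2.2.2

/-- `a ⊴ b` iff `b − a ∈ ℕ·(−1,2,−1,0) + ℕ·(0,−1,2,−1)`. -/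
def tri (a b : Idx) : Prop :=
  ∃ s r : ℕ,
    (b.1 : ℤ) = a.1 - s ∧
    (b.2.1 : ℤ) = a.2.1 + 2 * s - r ∧
    (b.2.2.1 : ℤ) = a.2.2.1 - s + 2 * r ∧
    (b.2.2.2 : ℤ) = a.2.2.2 - r

/-- `S(a) = {b ∈ ℕ⁴ : a ⊴ b and a ≠ b}`. -/
def Sset (a : Idx) : Set Idx := {b | tri a b ∧ a ≠ b}

/-- Condition (i): `B[a] − E[a] ∈ Σ_{b ∈ S(a)} qℤ[q]·E[b]`. -/
def cond1 (B : Idx → Sgen) (a : Idx) : Prop :=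
  ∃ φ : Idx →₀ Polynomial ℤ,
    (↑φ.support : Set Idx) ⊆ Sset a ∧
    B a - Ee a =
      φ.sum fun b p => (qq * Polynomial.eval₂ (Int.castRingHom F) qq p) • Ee b

/-- Hypotheses on the bar involution of coefficients `bar : q ↦ q⁻¹` and on the
anti-automorphism `σ` of `S`: `σ` is an additive, anti-multiplicative bijection with
`σ(c(q)·x) = c(q⁻¹)·σ(x)` and `σ(uᵢ) = q^{2i}uᵢ`. -/
def SigmaHyp (bar : F →+* F) (σ : Sgen → Sgen) : Prop :=
  bar qq = qq⁻¹ ∧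
  Function.Bijective σ ∧
  (∀ x y : Sgen, σ (x + y) = σ x + σ y) ∧
  (∀ x y : Sgen, σ (x * y) = σ y * σ x) ∧
  (∀ (c : F) (x : Sgen), σ (c • x) = bar c • σ x) ∧
  σ us0 = us0 ∧ σ us1 = qq ^ 2 • us1 ∧ σ us2 = qq ^ 4 • us2 ∧ σ us3 = qq ^ 6 • us3

/-- The defining properties of the dual canonical basis `B`: for every `a ∈ ℕ⁴`,
`B[a] − E[a] ∈ Σ_{b ∈ S(a)} qℤ[q]·E[b]` and `σ(B[a]) = q^{−N(a)}B[a]`. -/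
def DCB (bar : F →+* F) (σ : Sgen → Sgen) (B : Idx → Sgen) : Prop :=
  ∀ a : Idx, cond1 B a ∧ σ (B a) = qq ^ (-Nnum a) • B a

/-- Extension of `B` to integer quadruples by the convention that `B[a] = 0` whenever
some coordinate of `a` is negative. -/
def Bz (B : Idx → Sgen) (a : ℤ × ℤ × ℤ × ℤ) : Sgen :=
  if 0 ≤ a.1 ∧ 0 ≤ a.2.1 ∧ 0 ≤ a.2.2.1 ∧ 0 ≤ a.2.2.2 then
    B (a.1.toNat, a.2.1.toNat, a.2.2.1.toNat, a.2.2.2.toNat)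
  else 0

/-!
Put `z = u₃u₀ - q²u₂u₁` and `p = p₀p₁`; they commute. The sequence `Tₙ` with `T₀ = u₃`,
`T₁ = u₃z - q²p₁u₂` and `Tₙ₊₂ = Tₙ₊₁z - q²Tₙp` also satisfies the left-handed recursion
`Tₙ₊₂ = q²zTₙ₊₁ - Tₙp`. Expanding `TₙTₙ₊₁` by one recursion and `Tₙ₊₁Tₙ` by the other gives
`TₙTₙ₊₁ = q²Tₙ₊₁Tₙ` by induction on `n`.

A power of `q` times `Tₙ` is `B[n+1,0,0,n]`. Indeed `σ` exchanges the two recursions, so `Tₙ` is an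
eigenvector of `σ`, and it expands as `E[n+1,0,0,n]` modulo `q` times the `ℤ[q]`-lattice spanned by
the `E[b]` of the same bidegree. These two properties determine the dual canonical basis element,
because `σ` is unitriangular up to a scalar on each bidegree and no nonzero element of `qℤ[q]` is
fixed by `q ↦ q⁻¹`.

The commutation relations of adjacent generators hold since `uᵢ₊₁uᵢ` is a dual canonical basis
element, hence an eigenvector of `σ`; the remaining ones follow by applying the derivation `[A, ·]`.
-/

variable {K R : Type*} [Field K] [Ring R] [Algebra K R]

section QCommutation

open MulOpposite

variable {c d : K} {x y z : R}

/-- `x` and `y` commute up to the scalar `c`. -/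
def QCommute (c : K) (x y : R) : Prop := x * y = c • (y * x)

namespace QCommute

theorem left_comm (h : QCommute c x y) (z : R) : x * (y * z) = c • (y * (x * z)) := by
  rw [← mul_assoc, h, smul_mul_assoc, mul_assoc]

theorem symm (h : QCommute c x y) (hdc : d * c = 1) : QCommute d y x := by
  rw [QCommute, h, smul_smul, hdc, one_smul]

theorem mul_right (hy : QCommute c x y) (hz : QCommute d x z) : QCommute (c * d) x (y * z) := by
  rw [QCommute, hy.left_comm, hz, mul_smul_comm, smul_smul, mul_assoc]

theorem mul_left (hx : QCommute c x z) (hy : QCommute d y z) : QCommute (c * d) (x * y) z := by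
  rw [QCommute, mul_assoc, hy, mul_smul_comm, hx.left_comm, smul_smul, mul_comm d c]

theorem smul_right (h : QCommute c x y) (a : K) : QCommute c x (a • y) := by
  rw [QCommute, mul_smul_comm, h, smul_mul_assoc, smul_comm]

theorem smul_left (h : QCommute c x y) (a : K) : QCommute c (a • x) y := by
  rw [QCommute, smul_mul_assoc, h, mul_smul_comm, smul_comm]

theorem sub_right (hy : QCommute c x y) (hz : QCommute c x z) : QCommute c x (y - z) := by
  rw [QCommute, mul_sub, hy, hz, sub_mul, smul_sub]

theorem one_left (y : R) : QCommute (1 : K) 1 y := by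
  rw [QCommute, one_mul, mul_one, one_smul]

theorem one_right (x : R) : QCommute (1 : K) x 1 := by
  rw [QCommute, one_mul, mul_one, one_smul]

theorem pow_right (h : QCommute c x y) (k : ℕ) : QCommute (c ^ k) x (y ^ k) := by
  induction k with
  | zero => simpa only [pow_zero] using one_right x
  | succ k ih => simpa only [pow_succ] using ih.mul_right h

theorem pow_left (h : QCommute c x y) (k : ℕ) : QCommute (c ^ k) (x ^ k) y := by
  induction k with
  | zero => simpa only [pow_zero] using one_left y
  | succ k ih => simpa only [pow_succ] using ih.mul_left h

theorem of_op (h : QCommute c (op x) (op y)) : QCommute c y x := op_injective h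

end QCommute

end QCommutation

/-! ### Quadratic straightening relations -/

section Straightening

open MulOpposite

variable {q : K} {u : Fin 4 → R}

/-- The quadratic straightening relations that rewrite a product of two generators in PBW order,
i.e. with indices decreasing from left to right. -/
structure StraighteningRel (q : K) (u : Fin 4 → R) : Prop where
  q_ne_zero : q ≠ 0
  rel01 : QCommute (q⁻¹ ^ 2) (u 0) (u 1)
  rel12 : QCommute (q⁻¹ ^ 2) (u 1) (u 2)
  rel23 : QCommute (q⁻¹ ^ 2) (u 2) (u 3)
  rel02 : u 0 * u 2 = q⁻¹ ^ 2 • (u 2 * u 0) + (q⁻¹ ^ 2 - 1) • (u 1 * u 1)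
  rel13 : u 1 * u 3 = q⁻¹ ^ 2 • (u 3 * u 1) + (q⁻¹ ^ 2 - 1) • (u 2 * u 2)
  rel03 : u 0 * u 3 = q⁻¹ ^ 2 • (u 3 * u 0) + (q⁻¹ ^ 4 - 1) • (u 2 * u 1)

/-- The quantum minor `p₁ = u₃u₁ - q²u₂²` on columns 1, 2 of the Hankel matrix
`(u₃ u₂ u₁; u₂ u₁ u₀)`. -/
def minor12 (q : K) (u : Fin 4 → R) : R := u 3 * u 1 - q ^ 2 • (u 2 * u 2)

/-- The quantum minor `u₃u₀ - q²u₂u₁` on columns 1, 3 of the Hankel matrix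
`(u₃ u₂ u₁; u₂ u₁ u₀)`. -/
def minor13 (q : K) (u : Fin 4 → R) : R := u 3 * u 0 - q ^ 2 • (u 2 * u 1)

/-- The quantum minor `p₀ = u₂u₀ - q²u₁²` on columns 2, 3 of the Hankel matrix
`(u₃ u₂ u₁; u₂ u₁ u₀)`. -/
def minor23 (q : K) (u : Fin 4 → R) : R := u 2 * u 0 - q ^ 2 • (u 1 * u 1)

/-- The reversed generators in the opposite algebra. They satisfy the same straightening relations,
which halves the number of identities to be checked. -/
def opRev (u : Fin 4 → R) : Fin 4 → Rᵐᵒᵖ := fun i => op (u i.rev)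

namespace StraighteningRel

theorem opRev (h : StraighteningRel q u) : StraighteningRel q (opRev u) where
  q_ne_zero := h.q_ne_zero
  rel01 := unop_injective h.rel23
  rel12 := unop_injective h.rel12
  rel23 := unop_injective h.rel01
  rel02 := unop_injective h.rel13
  rel13 := unop_injective h.rel02
  rel03 := unop_injective h.rel03

theorem straighten (h : StraighteningRel q u) :
    u 0 * u 1 = q⁻¹ ^ 2 • (u 1 * u 0) ∧ u 1 * u 2 = q⁻¹ ^ 2 • (u 2 * u 1) ∧
    u 2 * u 3 = q⁻¹ ^ 2 • (u 3 * u 2) ∧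
    u 0 * u 2 = q⁻¹ ^ 2 • (u 2 * u 0) + (q⁻¹ ^ 2 - 1) • (u 1 * u 1) ∧
    u 1 * u 3 = q⁻¹ ^ 2 • (u 3 * u 1) + (q⁻¹ ^ 2 - 1) • (u 2 * u 2) ∧
    u 0 * u 3 = q⁻¹ ^ 2 • (u 3 * u 0) + (q⁻¹ ^ 4 - 1) • (u 2 * u 1) :=
  ⟨h.rel01, h.rel12, h.rel23, h.rel02, h.rel13, h.rel03⟩

theorem straighten_assoc (h : StraighteningRel q u) (x : R) :
    u 0 * (u 1 * x) = q⁻¹ ^ 2 • (u 1 * (u 0 * x)) ∧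
    u 1 * (u 2 * x) = q⁻¹ ^ 2 • (u 2 * (u 1 * x)) ∧
    u 2 * (u 3 * x) = q⁻¹ ^ 2 • (u 3 * (u 2 * x)) ∧
    u 0 * (u 2 * x) = q⁻¹ ^ 2 • (u 2 * (u 0 * x)) + (q⁻¹ ^ 2 - 1) • (u 1 * (u 1 * x)) ∧
    u 1 * (u 3 * x) = q⁻¹ ^ 2 • (u 3 * (u 1 * x)) + (q⁻¹ ^ 2 - 1) • (u 2 * (u 2 * x)) ∧
    u 0 * (u 3 * x) = q⁻¹ ^ 2 • (u 3 * (u 0 * x)) + (q⁻¹ ^ 4 - 1) • (u 2 * (u 1 * x)) := by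
  refine ⟨h.rel01.left_comm x, h.rel12.left_comm x, h.rel23.left_comm x, ?_, ?_, ?_⟩
  · rw [← mul_assoc, h.rel02]; simp only [add_mul, smul_mul_assoc, mul_assoc]
  · rw [← mul_assoc, h.rel13]; simp only [add_mul, smul_mul_assoc, mul_assoc]
  · rw [← mul_assoc, h.rel03]; simp only [add_mul, smul_mul_assoc, mul_assoc]

theorem minor12_three (h : StraighteningRel q u) : QCommute (q⁻¹ ^ 2) (minor12 q u) (u 3) := by
  have hq := h.q_ne_zero
  simp only [QCommute, minor12, mul_add, mul_sub, sub_mul, smul_mul_assoc, mul_smul_comm,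
    smul_smul, smul_sub, mul_assoc, h.straighten, h.straighten_assoc]
  match_scalars <;> field_simp
  ring

theorem minor12_two (h : StraighteningRel q u) : QCommute (1 : K) (minor12 q u) (u 2) := by
  have hq := h.q_ne_zero
  simp only [QCommute, minor12, mul_sub, sub_mul, smul_mul_assoc, mul_smul_comm,
    smul_smul, smul_sub, mul_assoc, h.straighten, h.straighten_assoc]
  match_scalars <;> field_simp

theorem minor12_one (h : StraighteningRel q u) : QCommute (q ^ 2) (minor12 q u) (u 1) := by
  have hq := h.q_ne_zero
  simp only [QCommute, minor12, mul_sub, sub_mul, smul_mul_assoc, mul_smul_comm,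
    smul_smul, smul_sub, mul_assoc, h.straighten, h.straighten_assoc]
  match_scalars <;> field_simp
  ring

theorem minor12_zero (h : StraighteningRel q u) : QCommute (q ^ 4) (minor12 q u) (u 0) := by
  have hq := h.q_ne_zero
  simp only [QCommute, minor12, mul_add, mul_sub, sub_mul, smul_mul_assoc, mul_smul_comm,
    smul_smul, smul_add, smul_sub, mul_assoc, h.straighten, h.straighten_assoc]
  match_scalars <;> field_simp
  ring

theorem one_minor23 (h : StraighteningRel q u) : QCommute (1 : K) (u 1) (minor23 q u) :=
  QCommute.of_op h.opRev.minor12_two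

theorem two_minor23 (h : StraighteningRel q u) : QCommute (q ^ 2) (u 2) (minor23 q u) :=
  QCommute.of_op h.opRev.minor12_one

theorem three_minor23 (h : StraighteningRel q u) : QCommute (q ^ 4) (u 3) (minor23 q u) :=
  QCommute.of_op h.opRev.minor12_zero

theorem minor12_minor13 (h : StraighteningRel q u) :
    QCommute (q ^ 2) (minor12 q u) (minor13 q u) := by
  have hq := h.q_ne_zero
  have hu3u0 : QCommute (q ^ 2) (minor12 q u) (u 3 * u 0) := by
    convert h.minor12_three.mul_right h.minor12_zero using 1
    field_simp
  have hu2u1 : QCommute (q ^ 2) (minor12 q u) (u 2 * u 1) := by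
    simpa only [one_mul] using h.minor12_two.mul_right h.minor12_one
  exact hu3u0.sub_right (hu2u1.smul_right _)

theorem minor13_minor23 (h : StraighteningRel q u) :
    QCommute (q ^ 2) (minor13 q u) (minor23 q u) :=
  QCommute.of_op h.opRev.minor12_minor13

theorem minor12_minor23 (h : StraighteningRel q u) :
    QCommute (q ^ 4) (minor12 q u) (minor23 q u) := by
  have hu2u0 : QCommute (q ^ 4) (minor12 q u) (u 2 * u 0) := by
    simpa only [one_mul] using h.minor12_two.mul_right h.minor12_zero
  have hu1u1 : QCommute (q ^ 4) (minor12 q u) (u 1 * u 1) := by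
    simpa only [← pow_add] using h.minor12_one.mul_right h.minor12_one
  exact hu2u0.sub_right (hu1u1.smul_right _)

theorem minor13_mul_three (h : StraighteningRel q u) :
    minor13 q u * u 3 =
      q⁻¹ ^ 2 • (u 3 * minor13 q u) + (q⁻¹ ^ 2 - 1) • (minor12 q u * u 2) := by
  have hq := h.q_ne_zero
  simp only [minor12, minor13, mul_add, mul_sub, sub_mul, smul_mul_assoc, mul_smul_comm,
    smul_smul, smul_add, smul_sub, mul_assoc, h.straighten, h.straighten_assoc]
  match_scalars <;> field_simp
  ring

theorem minor13_mul_two (h : StraighteningRel q u) :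
    minor13 q u * u 2 =
      q⁻¹ ^ 2 • (u 2 * minor13 q u) + (q ^ 2 - 1) • (minor23 q u * u 3) := by
  have hq := h.q_ne_zero
  simp only [minor13, minor23, mul_add, mul_sub, sub_mul, smul_mul_assoc, mul_smul_comm,
    smul_smul, smul_add, smul_sub, mul_assoc, h.straighten, h.straighten_assoc]
  match_scalars <;> field_simp <;> ring

theorem minor13_sq (h : StraighteningRel q u) :
    q ^ 2 • (minor13 q u * minor13 q u - q ^ 2 • (minor23 q u * minor12 q u)) =
      (u 3 * minor13 q u - q ^ 2 • (minor12 q u * u 2)) * u 0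
        - q ^ 2 • (u 3 * (u 1 * minor23 q u)) := by
  have hq := h.q_ne_zero
  simp only [minor12, minor13, minor23, mul_add, mul_sub, sub_mul, smul_mul_assoc,
    mul_smul_comm, smul_smul, smul_add, smul_sub, mul_assoc, h.straighten, h.straighten_assoc]
  match_scalars <;> field_simp <;> ring

end StraighteningRel

end Straightening

/-! ### Chebyshev and cluster sequences -/

section ClusterSequence

variable {q : K} {z p x y : R}

/-- The `q`-Chebyshev polynomials of the second kind in `z` and `p`, indexed from `V₀ = 0`. -/
def qChebyshev (q : K) (z p : R) : ℕ → R
  | 0 => 0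
  | 1 => 1
  | n + 2 => z * qChebyshev q z p (n + 1) - q ^ 2 • (p * qChebyshev q z p n)

/-- The solution `Tₙ` of `Tₙ₊₂ = Tₙ₊₁z - q²Tₙp` with `T₀ = x` and `T₁ = xz - q²y`. -/
def clusterSeq (q : K) (z p x y : R) (n : ℕ) : R :=
  x * qChebyshev q z p (n + 1) - q ^ 2 • (y * qChebyshev q z p n)

theorem commute_qChebyshev {t : R} (hz : Commute t z) (hp : Commute t p) (n : ℕ) :
    Commute t (qChebyshev q z p n) := by
  induction n using Nat.twoStepInduction with
  | zero => exact Commute.zero_right t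
  | one => exact Commute.one_right t
  | more n ih₀ ih₁ => exact (hz.mul_right ih₁).sub_right ((hp.mul_right ih₀).smul_right _)

theorem qChebyshev_add_two_right (hzp : Commute z p) (n : ℕ) :
    qChebyshev q z p (n + 2) =
      qChebyshev q z p (n + 1) * z - q ^ 2 • (qChebyshev q z p n * p) := by
  rw [qChebyshev, (commute_qChebyshev (Commute.refl z) hzp _).eq,
    (commute_qChebyshev hzp.symm (Commute.refl p) _).eq]

theorem clusterSeq_zero : clusterSeq q z p x y 0 = x := by
  simp [clusterSeq, qChebyshev]

theorem clusterSeq_one : clusterSeq q z p x y 1 = x * z - q ^ 2 • y := by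
  simp [clusterSeq, qChebyshev]

theorem clusterSeq_add_two_right (hzp : Commute z p) (n : ℕ) :
    clusterSeq q z p x y (n + 2) =
      clusterSeq q z p x y (n + 1) * z - q ^ 2 • (clusterSeq q z p x y n * p) := by
  simp only [clusterSeq, qChebyshev_add_two_right hzp (n + 1), qChebyshev_add_two_right hzp n,
    mul_sub, sub_mul, mul_smul_comm, smul_mul_assoc, mul_assoc, smul_sub]
  module

/-- The relations between `z`, `p`, `x`, `y` under which consecutive terms of
`clusterSeq q z p x y` commute up to `q²`. -/
structure ClusterRel (q : K) (z p x y : R) : Prop where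
  q_ne_zero : q ≠ 0
  commute_zp : Commute z p
  mul_zx : z * x = q⁻¹ ^ 2 • (x * z) + (q⁻¹ ^ 2 - 1) • y
  mul_zy : z * y = q⁻¹ ^ 4 • (y * z) + (q⁻¹ ^ 2 - q⁻¹ ^ 4) • (x * p)
  qCommute_px : QCommute (q⁻¹ ^ 6) p x
  qCommute_py : QCommute (q⁻¹ ^ 6) p y
  qCommute_xy : QCommute (q ^ 4) x y

namespace ClusterRel

theorem clusterSeq_one_left (h : ClusterRel q z p x y) :
    clusterSeq q z p x y 1 = q ^ 2 • (z * x) - y := by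
  have hq := h.q_ne_zero
  rw [clusterSeq_one, h.mul_zx]
  match_scalars <;> field_simp
  ring

theorem clusterSeq_add_two_left (h : ClusterRel q z p x y) (n : ℕ) :
    clusterSeq q z p x y (n + 2) =
      q ^ 2 • (z * clusterSeq q z p x y (n + 1)) - clusterSeq q z p x y n * p := by
  have hq := h.q_ne_zero
  have hpV := fun m => (commute_qChebyshev (q := q) h.commute_zp.symm (Commute.refl p) m).eq
  have mul_zx_assoc : ∀ t, z * (x * t) =
      q⁻¹ ^ 2 • (x * (z * t)) + (q⁻¹ ^ 2 - 1) • (y * t) := fun t => by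
    rw [← mul_assoc, h.mul_zx]; simp only [add_mul, smul_mul_assoc, mul_assoc]
  have mul_zy_assoc : ∀ t, z * (y * t) =
      q⁻¹ ^ 4 • (y * (z * t)) + (q⁻¹ ^ 2 - q⁻¹ ^ 4) • (x * (p * t)) := fun t => by
    rw [← mul_assoc, h.mul_zy]; simp only [add_mul, smul_mul_assoc, mul_assoc]
  simp only [clusterSeq, qChebyshev, mul_sub, sub_mul, mul_smul_comm, smul_mul_assoc, mul_assoc,
    ← hpV, mul_zx_assoc, mul_zy_assoc, smul_sub, smul_add, smul_smul]
  match_scalars <;> field_simp <;> ring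

theorem qCommute_p_clusterSeq (h : ClusterRel q z p x y) (n : ℕ) :
    QCommute (q⁻¹ ^ 6) p (clusterSeq q z p x y n) := by
  have hpV : ∀ m, QCommute (1 : K) p (qChebyshev q z p m) := fun m => by
    rw [QCommute, one_smul]
    exact commute_qChebyshev h.commute_zp.symm (Commute.refl p) m
  have hx := h.qCommute_px.mul_right (hpV (n + 1))
  have hy := h.qCommute_py.mul_right (hpV n)
  rw [mul_one] at hx hy
  exact hx.sub_right (hy.smul_right _)

theorem qCommute_clusterSeq_succ (h : ClusterRel q z p x y) (n : ℕ) :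
    QCommute (q ^ 2) (clusterSeq q z p x y n) (clusterSeq q z p x y (n + 1)) := by
  have hq := h.q_ne_zero
  induction n with
  | zero =>
    have hxy := h.qCommute_xy
    rw [QCommute] at hxy ⊢
    rw [zero_add]
    nth_rewrite 1 [h.clusterSeq_one_left]
    rw [clusterSeq_one, clusterSeq_zero]
    simp only [mul_sub, sub_mul, mul_smul_comm, smul_mul_assoc, mul_assoc, smul_sub, hxy]
    module
  | succ n ih =>
    have hpT := h.qCommute_p_clusterSeq (n + 1)
    rw [QCommute] at ih hpT ⊢
    nth_rewrite 1 [h.clusterSeq_add_two_left n]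
    rw [clusterSeq_add_two_right h.commute_zp n]
    simp only [mul_sub, sub_mul, mul_smul_comm, smul_mul_assoc, mul_assoc, smul_sub, hpT]
    rw [← mul_assoc (clusterSeq q z p x y n), ih, ← mul_assoc (clusterSeq q z p x y (n + 1)) _ p]
    simp only [smul_mul_assoc]
    match_scalars <;> field_simp

end ClusterRel

end ClusterSequence

/-! ### The cluster sequence of the quantum minors -/

section ClusterVariable

variable {q : K} {u : Fin 4 → R}

/-- The unnormalised imaginary element `Vₙ(z, p₀p₁)` with `z` the minor `u₃u₀ - q²u₂u₁`. -/
def chebyshevVar (q : K) (u : Fin 4 → R) (n : ℕ) : R :=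
  qChebyshev q (minor13 q u) (minor23 q u * minor12 q u) n

/-- The unnormalised cluster variable with leading monomial `u₃ⁿ⁺¹u₀ⁿ`. -/
def clusterVar (q : K) (u : Fin 4 → R) (n : ℕ) : R :=
  clusterSeq q (minor13 q u) (minor23 q u * minor12 q u) (u 3) (minor12 q u * u 2) n

theorem chebyshevVar_add_two (n : ℕ) :
    chebyshevVar q u (n + 2) = minor13 q u * chebyshevVar q u (n + 1)
      - q ^ 2 • (minor23 q u * minor12 q u * chebyshevVar q u n) := rfl

namespace StraighteningRel

theorem minor23_three (h : StraighteningRel q u) : QCommute (q⁻¹ ^ 4) (minor23 q u) (u 3) :=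
  h.three_minor23.symm (by simp [h.q_ne_zero])

theorem minor23_two (h : StraighteningRel q u) : QCommute (q⁻¹ ^ 2) (minor23 q u) (u 2) :=
  h.two_minor23.symm (by simp [h.q_ne_zero])

theorem minor13_minor12 (h : StraighteningRel q u) :
    QCommute (q⁻¹ ^ 2) (minor13 q u) (minor12 q u) :=
  h.minor12_minor13.symm (by simp [h.q_ne_zero])

theorem minor23_minor12 (h : StraighteningRel q u) :
    QCommute (q⁻¹ ^ 4) (minor23 q u) (minor12 q u) :=
  h.minor12_minor23.symm (by simp [h.q_ne_zero])

theorem commute_minor13 (h : StraighteningRel q u) :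
    Commute (minor13 q u) (minor23 q u * minor12 q u) := by
  have hzp := h.minor13_minor23.mul_right h.minor13_minor12
  rwa [← mul_pow, mul_inv_cancel₀ h.q_ne_zero, one_pow, QCommute, one_smul] at hzp

theorem minor13_mul_minor12_two (h : StraighteningRel q u) :
    minor13 q u * (minor12 q u * u 2) =
      q⁻¹ ^ 4 • (minor12 q u * u 2 * minor13 q u)
        + (q⁻¹ ^ 2 - q⁻¹ ^ 4) • (u 3 * (minor23 q u * minor12 q u)) := by
  have hq := h.q_ne_zero
  have hPu : minor12 q u * (minor23 q u * u 3) =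
      q⁻¹ ^ 2 • (u 3 * (minor23 q u * minor12 q u)) := by
    rw [h.minor23_three, mul_smul_comm, h.minor12_three.left_comm, h.minor12_minor23,
      mul_smul_comm]
    match_scalars
    field_simp
  rw [h.minor13_minor12.left_comm, h.minor13_mul_two, mul_add, mul_smul_comm, mul_smul_comm, hPu,
    mul_assoc]
  match_scalars <;> field_simp

theorem clusterRel (h : StraighteningRel q u) :
    ClusterRel q (minor13 q u) (minor23 q u * minor12 q u) (u 3) (minor12 q u * u 2) where
  q_ne_zero := h.q_ne_zero
  commute_zp := h.commute_minor13
  mul_zx := h.minor13_mul_three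
  mul_zy := h.minor13_mul_minor12_two
  qCommute_px := by simpa only [← pow_add] using h.minor23_three.mul_left h.minor12_three
  qCommute_py := by
    have hP : QCommute (q⁻¹ ^ 4) (minor23 q u * minor12 q u) (minor12 q u) := by
      simpa only [mul_one] using h.minor23_minor12.mul_left (d := (1 : K)) (by simp [QCommute])
    have hu : QCommute (q⁻¹ ^ 2) (minor23 q u * minor12 q u) (u 2) := by
      simpa only [mul_one] using h.minor23_two.mul_left h.minor12_two
    simpa only [← pow_add] using hP.mul_right hu
  qCommute_xy := by
    have hP : QCommute (q ^ 2) (u 3) (minor12 q u) :=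
      h.minor12_three.symm (by simp [h.q_ne_zero])
    have hu : QCommute (q ^ 2) (u 3) (u 2) := h.rel23.symm (by simp [h.q_ne_zero])
    simpa only [← pow_add] using hP.mul_right hu

theorem clusterVar_add_two (h : StraighteningRel q u) (n : ℕ) :
    clusterVar q u (n + 2) = q ^ 2 • (minor13 q u * clusterVar q u (n + 1))
      - q ^ 6 • (minor23 q u * minor12 q u * clusterVar q u n) := by
  have hq := h.q_ne_zero
  have hpT := h.clusterRel.qCommute_p_clusterSeq n
  rw [clusterVar, h.clusterRel.clusterSeq_add_two_left, clusterVar, clusterVar, hpT]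
  match_scalars <;> field_simp

theorem smul_chebyshevVar_three (h : StraighteningRel q u) :
    q ^ 2 • chebyshevVar q u 3 =
      clusterVar q u 1 * u 0 - q ^ 2 • (clusterVar q u 0 * (u 1 * minor23 q u)) := by
  simpa [chebyshevVar, qChebyshev, clusterVar, clusterSeq_one, clusterSeq_zero] using h.minor13_sq

theorem minor12_two_one_minor23 (h : StraighteningRel q u) :
    minor12 q u * u 2 * (u 1 * minor23 q u) =
      q ^ 6 • (minor23 q u * minor12 q u * (u 2 * u 1)) := by
  have hu : QCommute (q ^ 2) (u 2 * u 1) (minor23 q u) := by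
    simpa only [mul_one] using h.two_minor23.mul_left h.one_minor23
  have hPu : QCommute (q ^ 6) (minor12 q u * (u 2 * u 1)) (minor23 q u) := by
    simpa only [← pow_add] using h.minor12_minor23.mul_left hu
  simpa only [QCommute, mul_assoc] using hPu

theorem smul_chebyshevVar_four (h : StraighteningRel q u) :
    q ^ 4 • chebyshevVar q u 4 =
      clusterVar q u 2 * u 0 - q ^ 2 • (clusterVar q u 1 * (u 1 * minor23 q u)) := by
  have hT1 : clusterVar q u 1 * (u 1 * minor23 q u) =
      q ^ 2 • (minor13 q u * (u 3 * (u 1 * minor23 q u)))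
        - q ^ 6 • (minor23 q u * minor12 q u * (u 2 * u 1)) := by
    rw [clusterVar, h.clusterRel.clusterSeq_one_left, sub_mul, h.minor12_two_one_minor23,
      smul_mul_assoc, mul_assoc]
  have hpz : minor23 q u * minor12 q u * minor13 q u =
      minor23 q u * minor12 q u * (u 3 * u 0)
        - q ^ 2 • (minor23 q u * minor12 q u * (u 2 * u 1)) := by
    rw [minor13, mul_sub, mul_smul_comm]
  have hV2 : chebyshevVar q u 2 = minor13 q u := by simp [chebyshevVar, qChebyshev]
  have hT0 : clusterVar q u 0 = u 3 := clusterSeq_zero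
  calc q ^ 4 • chebyshevVar q u 4
      = q ^ 2 • (minor13 q u * (q ^ 2 • chebyshevVar q u 3))
          - q ^ 6 • (minor23 q u * minor12 q u * minor13 q u) := by
        rw [chebyshevVar_add_two, hV2, mul_smul_comm]; module
    _ = _ := by
        rw [h.smul_chebyshevVar_three, hT1, hpz, h.clusterVar_add_two, hT0]
        simp only [mul_sub, sub_mul, mul_smul_comm, smul_mul_assoc, mul_assoc, smul_sub, zero_add]
        module

theorem smul_chebyshevVar_add_three (h : StraighteningRel q u) (n : ℕ) :
    q ^ (2 * n + 2) • chebyshevVar q u (n + 3) =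
      clusterVar q u (n + 1) * u 0 - q ^ 2 • (clusterVar q u n * (u 1 * minor23 q u)) := by
  induction n using Nat.twoStepInduction with
  | zero => exact h.smul_chebyshevVar_three
  | one => exact h.smul_chebyshevVar_four
  | more n ih₀ ih₁ =>
    calc q ^ (2 * (n + 2) + 2) • chebyshevVar q u (n + 5)
        = q ^ 2 • (minor13 q u * (q ^ (2 * (n + 1) + 2) • chebyshevVar q u (n + 4)))
          - q ^ 6 • (minor23 q u * minor12 q u *
              (q ^ (2 * n + 2) • chebyshevVar q u (n + 3))) := by
          rw [chebyshevVar_add_two, mul_smul_comm, mul_smul_comm]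
          module
      _ = _ := by
          rw [ih₀, ih₁, h.clusterVar_add_two (n + 1), h.clusterVar_add_two n]
          simp only [mul_sub, sub_mul, smul_sub, mul_smul_comm, smul_mul_assoc, mul_assoc]
          module

end StraighteningRel

end ClusterVariable

/-! ### PBW monomials and their lattices -/

section PBW

open MulOpposite Pointwise

variable {q : K} {u : Fin 4 → R}

/-- The normalised PBW monomial `q^{b(a)} u₃^{a₃} u₂^{a₂} u₁^{a₁} u₀^{a₀}` of four elements of an
arbitrary algebra. -/
def pbw (q : K) (u : Fin 4 → R) (a : Idx) : R :=
  q ^ bexp a • (u 3 ^ a.1 * u 2 ^ a.2.1 * u 1 ^ a.2.2.1 * u 0 ^ a.2.2.2)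

theorem choose_succ_two (n : ℕ) : (n + 1).choose 2 = n + n.choose 2 := by
  rw [Nat.choose_succ_succ' n 1, Nat.choose_one_right]

theorem pbw_opRev (i j k l : ℕ) :
    pbw q (opRev u) (l, k, j, i) = op (pbw q u (i, j, k, l)) := by
  have hb : bexp (l, k, j, i) = bexp (i, j, k, l) := by simp only [bexp]; ring
  simp [pbw, opRev, hb, mul_assoc]

theorem pbw_succ_three (i j k l : ℕ) :
    pbw q u (i + 1, j, k, l) = q ^ i • (u 3 * pbw q u (i, j, k, l)) := by
  simp only [pbw, bexp, choose_succ_two, mul_smul_comm, smul_smul, pow_succ' (u 3), mul_assoc]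
  congr 1
  ring

theorem pbw_succ_zero (i j k l : ℕ) :
    pbw q u (i, j, k, l + 1) = q ^ l • (pbw q u (i, j, k, l) * u 0) :=
  op_injective <| by simpa [pbw_opRev, opRev] using pbw_succ_three (q := q) (u := opRev u) l k j i

namespace StraighteningRel

theorem pbw_succ_two (h : StraighteningRel q u) (i j k l : ℕ) :
    pbw q u (i, j + 1, k, l) = q ^ (2 * i + j) • (u 2 * pbw q u (i, j, k, l)) := by
  have hq := h.q_ne_zero
  simp only [pbw, bexp, choose_succ_two, mul_smul_comm, smul_smul, pow_succ' (u 2), mul_assoc,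
    (h.rel23.pow_right i).left_comm]
  congr 1
  simp only [inv_pow, ← pow_mul]
  field_simp
  ring

theorem minor12_mul_monomial (h : StraighteningRel q u) (i j : ℕ) (x : R) :
    minor12 q u * (u 3 ^ i * (u 2 ^ j * x)) =
      (q⁻¹ ^ 2) ^ (i + j) • (u 3 ^ (i + 1) * (u 2 ^ j * (u 1 * x)))
        - (q ^ 2 * (q⁻¹ ^ 2) ^ i) • (u 3 ^ i * (u 2 ^ (j + 2) * x)) := by
  have hP := (h.minor12_two.pow_right j).left_comm x
  rw [one_pow, one_smul] at hP
  rw [(h.minor12_three.pow_right i).left_comm, hP, minor12]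
  simp only [mul_sub, sub_mul, mul_smul_comm, smul_mul_assoc, smul_sub, smul_smul, mul_assoc,
    (h.rel23.pow_left j).left_comm, pow_succ, mul_comm, pow_add]

theorem smul_minor12_mul_pbw (h : StraighteningRel q u) (i j k l : ℕ) :
    q ^ (3 * i + 2 * j + k) • (minor12 q u * pbw q u (i, j, k, l)) =
      pbw q u (i + 1, j, k + 1, l) - q ^ (1 + i + k) • pbw q u (i, j + 2, k, l) := by
  have hq := h.q_ne_zero
  simp only [pbw, mul_smul_comm, mul_assoc, h.minor12_mul_monomial, smul_sub, smul_smul, bexp,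
    choose_succ_two, show j + 2 = (j + 1) + 1 from rfl, pow_succ' (u 1)]
  congr 2 <;> (simp only [inv_pow, ← pow_mul]; field_simp; ring)

end StraighteningRel

/-- The `ℤ[q]`-lattice spanned by the PBW monomials with index in `T`. -/
def pbwSpan (q : K) (u : Fin 4 → R) (T : Set Idx) : Submodule (Algebra.adjoin ℤ {q}) R :=
  Submodule.span _ (pbw q u '' T)

/-- The indices of the monomials of a given bidegree, where `uᵢ` has bidegree `(i, 3 - i)`. -/
def weightIdx (w w' : ℕ) : Set Idx :=
  {a | 3 * a.1 + 2 * a.2.1 + a.2.2.1 = w ∧ a.2.1 + 2 * a.2.2.1 + 3 * a.2.2.2 = w'}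

theorem mem_weightIdx {w w' i j k l : ℕ} :
    (i, j, k, l) ∈ weightIdx w w' ↔ 3 * i + 2 * j + k = w ∧ j + 2 * k + 3 * l = w' := Iff.rfl

variable {T T' : Set Idx} {w w' n : ℕ} {x : R}

theorem pbw_mem_pbwSpan {a : Idx} (ha : a ∈ T) : pbw q u a ∈ pbwSpan q u T :=
  Submodule.subset_span (Set.mem_image_of_mem _ ha)

theorem eval₂_smul_mem_pbwSpan (p : Polynomial ℤ) (hx : x ∈ pbwSpan q u T) :
    p.eval₂ (Int.castRingHom K) q • x ∈ pbwSpan q u T :=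
  Submodule.smul_mem _
    (⟨_, Polynomial.aeval_mem_adjoin_singleton ℤ q (p := p)⟩ : Algebra.adjoin ℤ {q}) hx

theorem pow_smul_mem_pbwSpan (n : ℕ) (hx : x ∈ pbwSpan q u T) : q ^ n • x ∈ pbwSpan q u T := by
  simpa using eval₂_smul_mem_pbwSpan (Polynomial.X ^ n) hx

theorem smul_mem_pbwSpan (hx : x ∈ pbwSpan q u T) : q • x ∈ pbwSpan q u T := by
  simpa using pow_smul_mem_pbwSpan 1 hx

theorem map_mem_pbwSpan (f : R →ₗ[K] R) (hf : ∀ a ∈ T, f (pbw q u a) ∈ pbwSpan q u T')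
    (hx : x ∈ pbwSpan q u T) : f x ∈ pbwSpan q u T' :=
  (Submodule.map_span_le (f.restrictScalars (Algebra.adjoin ℤ {q})) _ _).2
    (Set.forall_mem_image.2 hf) (Submodule.mem_map_of_mem hx)

theorem op_mem_pbwSpan :
    op x ∈ pbwSpan q (opRev u) (weightIdx w' w) ↔ x ∈ pbwSpan q u (weightIdx w w') := by
  have himage : pbw q (opRev u) '' weightIdx w' w = op '' (pbw q u '' weightIdx w w') := by
    ext y
    constructor
    · rintro ⟨⟨l, k, j, i⟩, ha, rfl⟩
      exact ⟨_, ⟨(i, j, k, l), mem_weightIdx.2 (by rw [mem_weightIdx] at ha; omega), rfl⟩,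
        (pbw_opRev i j k l).symm⟩
    · rintro ⟨_, ⟨⟨i, j, k, l⟩, ha, rfl⟩, rfl⟩
      exact ⟨(l, k, j, i), mem_weightIdx.2 (by rw [mem_weightIdx] at ha; omega),
        pbw_opRev i j k l⟩
  have hmap : pbwSpan q (opRev u) (weightIdx w' w) =
      (pbwSpan q u (weightIdx w w')).map
        (opLinearEquiv (M := R) (Algebra.adjoin ℤ {q})).toLinearMap := by
    rw [pbwSpan, himage, pbwSpan, Submodule.map_span]
    rfl
  rw [hmap]
  exact Submodule.mem_map_equiv (e := opLinearEquiv (M := R) (Algebra.adjoin ℤ {q})) _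

theorem smul_three_mul_mem_pbwSpan (hn : w ≤ 3 * n) (hx : x ∈ pbwSpan q u (weightIdx w w')) :
    q ^ n • (u 3 * x) ∈ pbwSpan q u (weightIdx (w + 3) w') := by
  refine map_mem_pbwSpan (q ^ n • LinearMap.mulLeft K (u 3)) ?_ hx
  rintro ⟨i, j, k, l⟩ ha
  rw [mem_weightIdx] at ha
  have hpbw : (q ^ n • LinearMap.mulLeft K (u 3)) (pbw q u (i, j, k, l)) =
      q ^ (n - i) • pbw q u (i + 1, j, k, l) := by
    rw [pbw_succ_three, smul_smul, ← pow_add, Nat.sub_add_cancel (by omega)]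
    rfl
  rw [hpbw]
  exact pow_smul_mem_pbwSpan _ (pbw_mem_pbwSpan (mem_weightIdx.2 (by omega)))

theorem smul_mul_zero_mem_pbwSpan (hn : w' ≤ 3 * n) (hx : x ∈ pbwSpan q u (weightIdx w w')) :
    q ^ n • (x * u 0) ∈ pbwSpan q u (weightIdx w (w' + 3)) :=
  op_mem_pbwSpan.1 (smul_three_mul_mem_pbwSpan (u := opRev u) hn (op_mem_pbwSpan.2 hx))

namespace StraighteningRel

theorem smul_two_mul_mem_pbwSpan (h : StraighteningRel q u) (hn : 2 * w ≤ 3 * n)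
    (hx : x ∈ pbwSpan q u (weightIdx w w')) :
    q ^ n • (u 2 * x) ∈ pbwSpan q u (weightIdx (w + 2) (w' + 1)) := by
  refine map_mem_pbwSpan (q ^ n • LinearMap.mulLeft K (u 2)) ?_ hx
  rintro ⟨i, j, k, l⟩ ha
  rw [mem_weightIdx] at ha
  have hpbw : (q ^ n • LinearMap.mulLeft K (u 2)) (pbw q u (i, j, k, l)) =
      q ^ (n - (2 * i + j)) • pbw q u (i, j + 1, k, l) := by
    rw [h.pbw_succ_two, smul_smul, ← pow_add, Nat.sub_add_cancel (by omega)]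
    rfl
  rw [hpbw]
  exact pow_smul_mem_pbwSpan _ (pbw_mem_pbwSpan (mem_weightIdx.2 (by omega)))

theorem smul_minor12_mul_mem_pbwSpan (h : StraighteningRel q u)
    (hx : x ∈ pbwSpan q u (weightIdx w w')) :
    q ^ w • (minor12 q u * x) ∈ pbwSpan q u (weightIdx (w + 4) (w' + 2)) := by
  refine map_mem_pbwSpan (q ^ w • LinearMap.mulLeft K (minor12 q u)) ?_ hx
  rintro ⟨i, j, k, l⟩ ha
  rw [mem_weightIdx] at ha
  rw [← ha.1, LinearMap.smul_apply, LinearMap.mulLeft_apply, h.smul_minor12_mul_pbw]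
  exact sub_mem (pbw_mem_pbwSpan (mem_weightIdx.2 (by omega)))
    (pow_smul_mem_pbwSpan _ (pbw_mem_pbwSpan (mem_weightIdx.2 (by omega))))

theorem smul_mul_one_mem_pbwSpan (h : StraighteningRel q u) (hn : 2 * w' ≤ 3 * n)
    (hx : x ∈ pbwSpan q u (weightIdx w w')) :
    q ^ n • (x * u 1) ∈ pbwSpan q u (weightIdx (w + 1) (w' + 2)) :=
  op_mem_pbwSpan.1 (h.opRev.smul_two_mul_mem_pbwSpan hn (op_mem_pbwSpan.2 hx))

theorem smul_mul_minor23_mem_pbwSpan (h : StraighteningRel q u)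
    (hx : x ∈ pbwSpan q u (weightIdx w w')) :
    q ^ w' • (x * minor23 q u) ∈ pbwSpan q u (weightIdx (w + 2) (w' + 4)) :=
  op_mem_pbwSpan.1 (h.opRev.smul_minor12_mul_mem_pbwSpan (op_mem_pbwSpan.2 hx))

end StraighteningRel

theorem smul_mem_smul_pbwSpan (hx : x ∈ pbwSpan q u T) : q • x ∈ q • pbwSpan q u T :=
  Submodule.smul_mem_pointwise_smul x q _ hx

theorem mem_pbwSpan_of_sub_pbw_mem {a : Idx} (ha : a ∈ T)
    (hx : x - pbw q u a ∈ q • pbwSpan q u T) : x ∈ pbwSpan q u T := by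
  obtain ⟨y, hy, hxy⟩ := (Submodule.mem_smul_pointwise_iff_exists _ _ _).1 hx
  rw [← sub_add_cancel x (pbw q u a), ← hxy]
  exact add_mem (smul_mem_pbwSpan hy) (pbw_mem_pbwSpan ha)

end PBW

/-! ### Leading terms of the normalised cluster variables -/

section LeadingTerm

open Pointwise

variable {q : K} {u : Fin 4 → R}

/-- `chebyshevVar` rescaled so that its PBW expansion starts with the monomial of index
`(n, 0, 0, n)`. -/
def normChebyshevVar (q : K) (u : Fin 4 → R) (n : ℕ) : R :=
  q ^ (4 * n.choose 2) • chebyshevVar q u (n + 1)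

/-- `clusterVar` rescaled so that its PBW expansion starts with the monomial of index
`(n + 1, 0, 0, n)`. -/
def normClusterVar (q : K) (u : Fin 4 → R) (n : ℕ) : R :=
  q ^ (4 * n.choose 2 + n) • clusterVar q u n

theorem normClusterVar_succ (n : ℕ) :
    normClusterVar q u (n + 1) = q ^ (n + 1) • (u 3 * normChebyshevVar q u (n + 1))
      - q • q ^ (3 * n + 2) • (minor12 q u * (q ^ (2 * n) • (u 2 * normChebyshevVar q u n))) := by
  simp only [normClusterVar, normChebyshevVar, clusterVar, chebyshevVar, clusterSeq,
    choose_succ_two, mul_smul_comm, smul_sub, smul_smul, mul_assoc]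
  congr 2 <;> ring

/-- The leading PBW terms asserted for the two normalised families, modulo `q` times the lattice of
the respective bidegree. -/
def HasLeadingTerms (q : K) (u : Fin 4 → R) (n : ℕ) : Prop :=
  normChebyshevVar q u n - pbw q u (n, 0, 0, n) ∈ q • pbwSpan q u (weightIdx (3 * n) (3 * n)) ∧
  normClusterVar q u n - pbw q u (n + 1, 0, 0, n) ∈
    q • pbwSpan q u (weightIdx (3 * n + 3) (3 * n))

theorem hasLeadingTerms_zero : HasLeadingTerms q u 0 := by
  constructor
  · simp [normChebyshevVar, chebyshevVar, qChebyshev, pbw, bexp]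
  · simp [normClusterVar, clusterVar, clusterSeq_zero, pbw, bexp]

theorem HasLeadingTerms.normChebyshevVar_mem {n : ℕ} (hn : HasLeadingTerms q u n) :
    normChebyshevVar q u n ∈ pbwSpan q u (weightIdx (3 * n) (3 * n)) :=
  mem_pbwSpan_of_sub_pbw_mem (mem_weightIdx.2 (by omega)) hn.1

theorem HasLeadingTerms.normClusterVar_mem {n : ℕ} (hn : HasLeadingTerms q u n) :
    normClusterVar q u n ∈ pbwSpan q u (weightIdx (3 * n + 3) (3 * n)) :=
  mem_pbwSpan_of_sub_pbw_mem (mem_weightIdx.2 (by omega)) hn.2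

namespace StraighteningRel

theorem normChebyshevVar_add_two (h : StraighteningRel q u) (n : ℕ) :
    normChebyshevVar q u (n + 2) = q ^ (n + 1) • (normClusterVar q u (n + 1) * u 0)
      - q • q • q ^ (3 * n + 2) •
        ((q ^ (2 * n) • (normClusterVar q u n * u 1)) * minor23 q u) := by
  have hc : 4 * (n + 2).choose 2 = (4 * n.choose 2 + 6 * n + 2) + (2 * n + 2) := by
    rw [choose_succ_two, choose_succ_two]; ring
  rw [normChebyshevVar, hc, pow_add, mul_smul, h.smul_chebyshevVar_add_three]
  simp only [normClusterVar, choose_succ_two, smul_mul_assoc, smul_sub, smul_smul, mul_assoc]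
  congr 2 <;> ring

theorem normClusterVar_succ_sub_pbw_mem (h : StraighteningRel q u) {n : ℕ}
    (hn : HasLeadingTerms q u n)
    (hV : normChebyshevVar q u (n + 1) - pbw q u (n + 1, 0, 0, n + 1) ∈
      q • pbwSpan q u (weightIdx (3 * (n + 1)) (3 * (n + 1)))) :
    normClusterVar q u (n + 1) - pbw q u (n + 2, 0, 0, n + 1) ∈
      q • pbwSpan q u (weightIdx (3 * (n + 1) + 3) (3 * (n + 1))) := by
  obtain ⟨y, hy, hVy⟩ := (Submodule.mem_smul_pointwise_iff_exists _ _ _).1 hV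
  have hlead : q ^ (n + 1) • (u 3 * y) ∈
      pbwSpan q u (weightIdx (3 * (n + 1) + 3) (3 * (n + 1))) :=
    smul_three_mul_mem_pbwSpan le_rfl hy
  have htail := h.smul_minor12_mul_mem_pbwSpan
    (h.smul_two_mul_mem_pbwSpan (n := 2 * n) (by omega) hn.normChebyshevVar_mem)
  convert smul_mem_smul_pbwSpan (sub_mem hlead htail) using 1
  rw [normClusterVar_succ, pbw_succ_three, sub_eq_iff_eq_add.1 hVy.symm]
  simp only [mul_add, mul_smul_comm, smul_add, smul_sub]
  module

theorem normChebyshevVar_add_two_sub_pbw_mem (h : StraighteningRel q u) {n : ℕ}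
    (hn : HasLeadingTerms q u n) (hn' : HasLeadingTerms q u (n + 1)) :
    normChebyshevVar q u (n + 2) - pbw q u (n + 2, 0, 0, n + 2) ∈
      q • pbwSpan q u (weightIdx (3 * (n + 2)) (3 * (n + 2))) := by
  obtain ⟨y, hy, hTy⟩ := (Submodule.mem_smul_pointwise_iff_exists _ _ _).1 hn'.2
  have hlead : q ^ (n + 1) • (y * u 0) ∈ pbwSpan q u (weightIdx (3 * (n + 2)) (3 * (n + 2))) :=
    smul_mul_zero_mem_pbwSpan le_rfl hy
  have htail := h.smul_mul_minor23_mem_pbwSpan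
    (h.smul_mul_one_mem_pbwSpan (n := 2 * n) (by omega) hn.normClusterVar_mem)
  convert smul_mem_smul_pbwSpan (sub_mem hlead (smul_mem_pbwSpan htail)) using 1
  rw [h.normChebyshevVar_add_two, pbw_succ_zero, sub_eq_iff_eq_add.1 hTy.symm]
  simp only [add_mul, smul_mul_assoc, smul_add, smul_sub]
  module

theorem hasLeadingTerms_one (h : StraighteningRel q u) : HasLeadingTerms q u 1 := by
  have hV : normChebyshevVar q u 1 - pbw q u (1, 0, 0, 1) ∈
      q • pbwSpan q u (weightIdx 3 3) := by
    have hE : normChebyshevVar q u 1 - pbw q u (1, 0, 0, 1) = q • -(q • pbw q u (0, 1, 1, 0)) := by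
      simp [normChebyshevVar, chebyshevVar, qChebyshev, pbw, bexp, minor13, smul_smul, pow_two]
    rw [hE]
    exact smul_mem_smul_pbwSpan
      (neg_mem (smul_mem_pbwSpan (pbw_mem_pbwSpan (mem_weightIdx.2 (by omega)))))
  exact ⟨hV, h.normClusterVar_succ_sub_pbw_mem hasLeadingTerms_zero hV⟩

theorem hasLeadingTerms (h : StraighteningRel q u) (n : ℕ) : HasLeadingTerms q u n := by
  induction n using Nat.twoStepInduction with
  | zero => exact hasLeadingTerms_zero
  | one => exact h.hasLeadingTerms_one
  | more n ih₀ ih₁ =>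
    have hV := h.normChebyshevVar_add_two_sub_pbw_mem ih₀ ih₁
    exact ⟨hV, h.normClusterVar_succ_sub_pbw_mem ih₁ hV⟩

end StraighteningRel

end LeadingTerm

/-! ### Bar-invariance and uniqueness -/

section Uniqueness

open Polynomial

variable {q : K} {bar : K →+* K}

theorem eq_zero_of_bar_fixed (hq : Transcendental ℤ q) (hbar : bar q = q⁻¹) {s : K}
    (hs : s ∈ Algebra.adjoin ℤ {q}) (hfix : bar (q * s) = q * s) : s = 0 := by
  have hq0 : q ≠ 0 := fun h => hq (h ▸ isAlgebraic_zero)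
  obtain ⟨p, rfl⟩ : ∃ p : ℤ[X], aeval q p = s :=
    AlgHom.mem_range _ |>.1 (Algebra.adjoin_singleton_eq_range_aeval ℤ q ▸ hs)
  by_contra hp
  have hp0 : p ≠ 0 := fun h => hp (by rw [h, map_zero])
  have hqp : q * aeval q p = aeval q (X * p) := by rw [map_mul, aeval_X]
  have hinv : aeval q⁻¹ (X * p) = aeval q (X * p) := by
    rw [← hbar, ← hqp, ← hfix, hqp, aeval_def, aeval_def, hom_eval₂,
      RingHom.ext_int (bar.comp (algebraMap ℤ K)) (algebraMap ℤ K)]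
  let _ : Invertible q⁻¹ := invertibleOfNonzero (inv_ne_zero hq0)
  have heval : aeval q (X * p).reverse = aeval q (X * p * X ^ (X * p).natDegree) := by
    have hrev := eval₂_reverse_mul_pow (algebraMap ℤ K) q⁻¹ (X * p)
    rw [invOf_eq_inv, inv_inv, ← aeval_def, ← aeval_def, hinv] at hrev
    rw [map_mul _ (X * p), map_pow, aeval_X, ← hrev, mul_assoc, ← mul_pow, inv_mul_cancel₀ hq0,
      one_pow, mul_one]
  have hdeg := congrArg natDegree (transcendental_iff_injective.1 hq heval)
  rw [natDegree_mul_X_pow _ (mul_ne_zero X_ne_zero hp0)] at hdeg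
  have hle := reverse_natDegree_le (X * p)
  rw [natDegree_X_mul hp0] at hdeg hle
  omega

variable {ι M : Type*} [AddCommGroup M] [Module K M]

theorem bar_coeff_eq_of_triangular (σ : M →ₛₗ[bar] M) {E : ι → M} (hE : LinearIndependent K E)
    {height : ι → ℕ} {c : K} (hc : c ≠ 0) {g : ι →₀ K}
    (htri : ∀ j ∈ g.support, σ (E j) - c • E j ∈ Submodule.span K (E '' {k | height k < height j}))
    (hσ : σ (Finsupp.linearCombination K E g) = c • Finsupp.linearCombination K E g)
    {i : ι} (hi : ∀ j ∈ g.support, height j ≤ height i) : bar (g i) = g i := by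
  set f : ι →₀ K := c • (g - g.mapRange bar (map_zero bar)) with hf
  have hbar : Finsupp.linearCombination K E (g.mapRange bar (map_zero bar)) =
      ∑ j ∈ g.support, bar (g j) • E j := by
    rw [Finsupp.linearCombination_apply,
      Finsupp.sum_of_support_subset _ Finsupp.support_mapRange _ (by simp)]
    simp
  have hmem : Finsupp.linearCombination K E f ∈
      Submodule.span K (E '' {k | height k < height i}) := by
    have hfE : Finsupp.linearCombination K E f =
        ∑ j ∈ g.support, bar (g j) • (σ (E j) - c • E j) := by
      rw [hf, map_smul, map_sub, smul_sub, ← hσ, hbar, Finsupp.linearCombination_apply, Finsupp.sum,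
        map_sum, Finset.smul_sum, ← Finset.sum_sub_distrib]
      exact Finset.sum_congr rfl fun j _ => by rw [map_smulₛₗ, smul_sub, smul_comm c]
    rw [hfE]
    refine sum_mem fun j hj => Submodule.smul_mem _ _ (Submodule.span_mono ?_ (htri j hj))
    exact Set.image_mono fun k (hk : height k < height j) => hk.trans_le (hi j hj)
  obtain ⟨f', hf'supp, hf'⟩ := (Finsupp.mem_span_image_iff_linearCombination K).1 hmem
  have hfi : f i = 0 := by
    rw [← hE hf']
    by_contra hne
    have hlt : height i < height i := hf'supp (Finsupp.mem_support_iff.2 hne)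
    exact hlt.false
  have hsub : g i - bar (g i) = 0 := by simpa [hf, hc] using hfi
  exact (sub_eq_zero.1 hsub).symm

end Uniqueness

/-! ### Dual canonical bases -/

section DualCanonicalBasis

open Pointwise

variable {q : K} {u : Fin 4 → R} {bar : K →+* K} {σ : R →ₛₗ[bar] R} {B : Idx → R}

/-- `B` is a dual canonical basis for the PBW monomials in `u` and the bar-semilinear map `σ`. -/
structure IsDualCanonicalBasis (q : K) (u : Fin 4 → R) (σ : R →ₛₗ[bar] R) (B : Idx → R) :
    Prop where
  linearIndependent : LinearIndependent K (pbw q u)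
  sub_pbw_mem : ∀ a, B a - pbw q u a ∈ q • pbwSpan q u (Sset a)
  map_eq : ∀ a, σ (B a) = q ^ (-Nnum a) • B a

/-- The number of outer generators `u₃`, `u₀` in the monomial of index `a`; it drops strictly when
`a` is replaced by a member of `Sset a`. -/
def outerDegree (a : Idx) : ℕ := a.1 + a.2.2.2

theorem outerDegree_lt_of_mem_Sset {a b : Idx} (hb : b ∈ Sset a) :
    outerDegree b < outerDegree a := by
  obtain ⟨a₃, a₂, a₁, a₀⟩ := a
  obtain ⟨b₃, b₂, b₁, b₀⟩ := b
  obtain ⟨⟨s, r, h₃, h₂, h₁, h₀⟩, hne⟩ := hb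
  simp only [outerDegree, ne_eq, Prod.mk.injEq] at *
  omega

theorem Sset_subset_weightIdx {a : Idx} {w w' : ℕ} (ha : a ∈ weightIdx w w') :
    Sset a ⊆ weightIdx w w' := by
  rintro ⟨b₃, b₂, b₁, b₀⟩ ⟨⟨s, r, h₃, h₂, h₁, h₀⟩, -⟩
  obtain ⟨a₃, a₂, a₁, a₀⟩ := a
  rw [mem_weightIdx] at ha ⊢
  simp only at h₃ h₂ h₁ h₀
  omega

theorem Nnum_eq_of_mem_weightIdx {a b : Idx} {w w' : ℕ} (ha : a ∈ weightIdx w w')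
    (hb : b ∈ weightIdx w w') : Nnum b = Nnum a := by
  obtain ⟨a₃, a₂, a₁, a₀⟩ := a
  obtain ⟨b₃, b₂, b₁, b₀⟩ := b
  rw [mem_weightIdx] at ha hb
  have htotal : (b₃ : ℤ) + b₂ + b₁ + b₀ = a₃ + a₂ + a₁ + a₀ := by omega
  simp only [Nnum, htotal]
  omega

theorem mem_span_of_mem_smul_pbwSpan {T : Set Idx} {x : R} (hx : x ∈ q • pbwSpan q u T) :
    x ∈ Submodule.span K (pbw q u '' T) := by
  obtain ⟨y, hy, rfl⟩ := (Submodule.mem_smul_pointwise_iff_exists _ _ _).1 hx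
  exact Submodule.smul_mem _ _ (Submodule.span_le_restrictScalars (Algebra.adjoin ℤ {q}) K _ hy)

theorem exists_coeff_of_mem_smul_pbwSpan {T : Set Idx} {x : R} (hx : x ∈ q • pbwSpan q u T) :
    ∃ g : Idx →₀ K, Finsupp.linearCombination K (pbw q u) g = x ∧ ↑g.support ⊆ T ∧
      ∀ a, ∃ s ∈ Algebra.adjoin ℤ {q}, g a = q * s := by
  obtain ⟨y, hy, rfl⟩ := (Submodule.mem_smul_pointwise_iff_exists _ _ _).1 hx
  obtain ⟨f, hfT, rfl⟩ := (Finsupp.mem_span_image_iff_linearCombination _).1 hy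
  refine ⟨f.mapRange (fun s : Algebra.adjoin ℤ {q} => q * (s : K)) (by simp), ?_, ?_,
    fun a => ⟨f a, (f a).2, by simp⟩⟩
  · rw [Finsupp.linearCombination_apply, Finsupp.linearCombination_apply,
      Finsupp.sum_mapRange_index (by simp), Finsupp.sum, Finsupp.sum, Finset.smul_sum]
    exact Finset.sum_congr rfl fun a _ => mul_smul q (f a : K) (pbw q u a)
  · exact (Finset.coe_subset.2 Finsupp.support_mapRange).trans hfT

namespace IsDualCanonicalBasis

theorem map_pbw_sub_mem (hB : IsDualCanonicalBasis q u σ B) (a : Idx) :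
    σ (pbw q u a) - q ^ (-Nnum a) • pbw q u a ∈
      Submodule.span K (pbw q u '' {b | outerDegree b < outerDegree a}) := by
  induction ha : outerDegree a using Nat.strong_induction_on generalizing a with
  | _ m ih =>
  let V : Submodule K R := Submodule.span K (pbw q u '' {b | outerDegree b < m})
  have hσV : ∀ y ∈ V, σ y ∈ V := by
    intro y hy
    induction hy using Submodule.span_induction with
    | mem y hy =>
      obtain ⟨b, hb : outerDegree b < m, rfl⟩ := hy
      have hσb : σ (pbw q u b) - q ^ (-Nnum b) • pbw q u b ∈ V :=
        Submodule.span_mono (Set.image_mono fun c (hc : _ < _) => hc.trans hb) (ih _ hb b rfl)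
      have hbV : pbw q u b ∈ V := Submodule.subset_span (Set.mem_image_of_mem _ hb)
      simpa only [sub_add_cancel] using V.add_mem hσb (V.smul_mem (q ^ (-Nnum b)) hbV)
    | zero => rw [map_zero]; exact V.zero_mem
    | add y z _ _ hy hz => rw [map_add]; exact V.add_mem hy hz
    | smul c y _ hy => rw [map_smulₛₗ]; exact V.smul_mem _ hy
  have ht : B a - pbw q u a ∈ V :=
    Submodule.span_mono (Set.image_mono fun b hb => (outerDegree_lt_of_mem_Sset hb).trans_eq ha)
      (mem_span_of_mem_smul_pbwSpan (hB.sub_pbw_mem a))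
  have hσt : σ (pbw q u a) - q ^ (-Nnum a) • pbw q u a =
      q ^ (-Nnum a) • (B a - pbw q u a) - σ (B a - pbw q u a) := by
    rw [map_sub, hB.map_eq, smul_sub]
    abel
  rw [hσt]
  exact sub_mem (Submodule.smul_mem _ _ ht) (hσV _ ht)

variable {a : Idx} {w w' : ℕ} {x : R}

theorem eq_zero_of_mem (hB : IsDualCanonicalBasis q u σ B) (hq : Transcendental ℤ q)
    (hbar : bar q = q⁻¹) (ha : a ∈ weightIdx w w') (hx : x ∈ q • pbwSpan q u (weightIdx w w'))
    (hσx : σ x = q ^ (-Nnum a) • x) : x = 0 := by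
  have hq0 : q ≠ 0 := fun h => hq (h ▸ isAlgebraic_zero)
  obtain ⟨g, rfl, hgw, hgq⟩ := exists_coeff_of_mem_smul_pbwSpan hx
  by_contra hne
  have hg : g.support.Nonempty :=
    Finsupp.support_nonempty_iff.2 fun h => hne (by rw [h, map_zero])
  obtain ⟨b, hb, hmax⟩ := g.support.exists_max_image outerDegree hg
  have hfix : bar (g b) = g b :=
    bar_coeff_eq_of_triangular σ hB.linearIndependent (zpow_ne_zero _ hq0)
      (fun c hc => Nnum_eq_of_mem_weightIdx ha (hgw hc) ▸ hB.map_pbw_sub_mem c) hσx hmax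
  obtain ⟨s, hs, hgs⟩ := hgq b
  rw [hgs] at hfix
  refine Finsupp.mem_support_iff.1 hb ?_
  rw [hgs, eq_zero_of_bar_fixed hq hbar hs hfix, mul_zero]

theorem eq_of_sub_pbw_mem (hB : IsDualCanonicalBasis q u σ B) (hq : Transcendental ℤ q)
    (hbar : bar q = q⁻¹) (ha : a ∈ weightIdx w w')
    (hx : x - pbw q u a ∈ q • pbwSpan q u (weightIdx w w'))
    (hσx : σ x = q ^ (-Nnum a) • x) : B a = x := by
  have hBa : B a - pbw q u a ∈ q • pbwSpan q u (weightIdx w w') :=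
    Submodule.map_mono (Submodule.span_mono (Set.image_mono (Sset_subset_weightIdx ha)))
      (hB.sub_pbw_mem a)
  refine sub_eq_zero.1 (hB.eq_zero_of_mem hq hbar ha ?_ ?_)
  · simpa using sub_mem hBa hx
  · rw [map_sub, hB.map_eq, hσx, smul_sub]

end IsDualCanonicalBasis

end DualCanonicalBasis

/-! ### Cluster variables as dual canonical basis elements -/

section BarAntihom

variable {q : K} {u : Fin 4 → R} {bar : K →+* K} {σ : R →ₛₗ[bar] R} {B : Idx → R}

/-- `σ` is the bar-semilinear antihomomorphism that scales the generator `uᵢ` by `q²ⁱ`. -/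
structure IsBarAntihom (q : K) (u : Fin 4 → R) (σ : R →ₛₗ[bar] R) : Prop where
  bar_q : bar q = q⁻¹
  map_mul : ∀ x y, σ (x * y) = σ y * σ x
  map_gen : ∀ i : Fin 4, σ (u i) = q ^ (2 * (i : ℕ)) • u i

namespace IsBarAntihom

theorem map_pow_smul (hσ : IsBarAntihom q u σ) (k : ℕ) (x : R) :
    σ (q ^ k • x) = q⁻¹ ^ k • σ x := by
  rw [map_smulₛₗ, map_pow, hσ.bar_q]

theorem map_minor12 (hσ : IsBarAntihom q u σ) (hu : StraighteningRel q u) :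
    σ (minor12 q u) = q ^ 6 • minor12 q u := by
  have hq := hu.q_ne_zero
  rw [minor12, map_sub, hσ.map_pow_smul, hσ.map_mul, hσ.map_mul]
  simp only [hσ.map_gen, smul_mul_assoc, mul_smul_comm, hu.rel13, smul_sub, smul_add, smul_smul]
  match_scalars <;> simp <;> field_simp
  ring

theorem map_minor13 (hσ : IsBarAntihom q u σ) (hu : StraighteningRel q u) :
    σ (minor13 q u) = q ^ 4 • minor13 q u := by
  have hq := hu.q_ne_zero
  rw [minor13, map_sub, hσ.map_pow_smul, hσ.map_mul, hσ.map_mul]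
  simp only [hσ.map_gen, smul_mul_assoc, mul_smul_comm, hu.rel03, hu.straighten, smul_sub,
    smul_add, smul_smul]
  match_scalars <;> simp <;> field_simp
  ring

theorem map_minor23 (hσ : IsBarAntihom q u σ) (hu : StraighteningRel q u) :
    σ (minor23 q u) = q ^ 2 • minor23 q u := by
  have hq := hu.q_ne_zero
  rw [minor23, map_sub, hσ.map_pow_smul, hσ.map_mul, hσ.map_mul]
  simp only [hσ.map_gen, smul_mul_assoc, mul_smul_comm, hu.rel02, smul_sub, smul_add, smul_smul]
  match_scalars <;> simp <;> field_simp
  ring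

/-- `σ` exchanges the right recursion of `clusterSeq` with the left one. -/
theorem map_clusterSeq (hσ : IsBarAntihom q u σ) {z p x y : R} (h : ClusterRel q z p x y)
    (hz : σ z = q ^ 4 • z) (hp : σ p = q ^ 12 • p) (hx : σ x = q ^ 6 • x) (hy : σ y = q ^ 10 • y)
    (n : ℕ) : σ (clusterSeq q z p x y n) = q ^ (2 * n + 6) • clusterSeq q z p x y n := by
  have hq := h.q_ne_zero
  induction n using Nat.twoStepInduction with
  | zero => rw [clusterSeq_zero, hx]
  | one =>
    nth_rewrite 1 [clusterSeq_one]
    rw [h.clusterSeq_one_left, map_sub, hσ.map_pow_smul, hσ.map_mul, hx, hy, hz]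
    simp only [smul_mul_assoc, mul_smul_comm]
    match_scalars <;> field_simp
  | more n ih₀ ih₁ =>
    nth_rewrite 1 [clusterSeq_add_two_right h.commute_zp]
    rw [h.clusterSeq_add_two_left, map_sub, hσ.map_pow_smul, hσ.map_mul, hσ.map_mul, ih₀, ih₁, hz,
      hp, smul_mul_smul_comm, smul_mul_smul_comm, h.qCommute_p_clusterSeq n]
    match_scalars <;> field_simp <;> ring

theorem map_clusterVar (hσ : IsBarAntihom q u σ) (hu : StraighteningRel q u) (n : ℕ) :
    σ (clusterVar q u n) = q ^ (2 * n + 6) • clusterVar q u n := by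
  refine hσ.map_clusterSeq hu.clusterRel (hσ.map_minor13 hu) ?_ (hσ.map_gen 3) ?_ n
  · rw [hσ.map_mul, hσ.map_minor12 hu, hσ.map_minor23 hu, smul_mul_smul_comm, hu.minor12_minor23,
      smul_smul]
    ring_nf
  · rw [hσ.map_mul, hσ.map_minor12 hu, hσ.map_gen, smul_mul_smul_comm, hu.minor12_two, one_smul,
      ← pow_add]
    rfl

theorem map_normClusterVar (hσ : IsBarAntihom q u σ) (hu : StraighteningRel q u) (n : ℕ) :
    σ (normClusterVar q u n) = q ^ (-Nnum (n + 1, 0, 0, n)) • normClusterVar q u n := by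
  have hq := hu.q_ne_zero
  have hchoose : (2 * n.choose 2 : ℤ) = n ^ 2 - n := by
    induction n with
    | zero => simp
    | succ n ih => rw [choose_succ_two]; push_cast; linarith
  have hexp : -((4 * n.choose 2 + n : ℕ) : ℤ) + (2 * n + 6 : ℕ) =
      -Nnum (n + 1, 0, 0, n) + (4 * n.choose 2 + n : ℕ) := by
    simp only [Nnum]; push_cast; linarith
  rw [normClusterVar, hσ.map_pow_smul, hσ.map_clusterVar hu, smul_smul, smul_smul, inv_pow,
    ← zpow_natCast, ← zpow_natCast q (2 * n + 6), ← zpow_neg, ← zpow_add₀ hq, ← zpow_add₀ hq, hexp]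

end IsBarAntihom

theorem IsDualCanonicalBasis.eq_normClusterVar (hB : IsDualCanonicalBasis q u σ B)
    (hσ : IsBarAntihom q u σ) (hu : StraighteningRel q u) (hq : Transcendental ℤ q) (n : ℕ) :
    B (n + 1, 0, 0, n) = normClusterVar q u n :=
  hB.eq_of_sub_pbw_mem hq hσ.bar_q (mem_weightIdx.2 (by omega)) (hu.hasLeadingTerms n).2
    (hσ.map_normClusterVar hu n)

theorem StraighteningRel.qCommute_normClusterVar_succ (hu : StraighteningRel q u) (n : ℕ) :
    QCommute (q ^ 2) (normClusterVar q u n) (normClusterVar q u (n + 1)) :=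
  ((hu.clusterRel.qCommute_clusterSeq_succ n).smul_right _).smul_left _

theorem stmt15_general (hq : Transcendental ℤ q) (hu : StraighteningRel q u)
    (hσ : IsBarAntihom q u σ) (hB : IsDualCanonicalBasis q u σ B) (n : ℕ) :
    QCommute (q ^ 2) (B (n + 1, 0, 0, n)) (B (n + 2, 0, 0, n + 1)) := by
  rw [hB.eq_normClusterVar hσ hu hq n, hB.eq_normClusterVar hσ hu hq (n + 1)]
  exact hu.qCommute_normClusterVar_succ n

end BarAntihom

/-! ### Origin of the straightening relations -/

section AdjacentRelations

variable {q : K} {u : Fin 4 → R} {bar : K →+* K} {σ : R →ₛₗ[bar] R} {B : Idx → R} {a : Idx}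

theorem Sset_eq_empty {w w' : ℕ} (ha : a ∈ weightIdx w w')
    (hmin : ∀ b ∈ weightIdx w w', outerDegree a ≤ outerDegree b) : Sset a = ∅ :=
  Set.eq_empty_of_forall_notMem fun b hb =>
    (outerDegree_lt_of_mem_Sset hb).not_ge (hmin b (Sset_subset_weightIdx ha hb))

namespace IsDualCanonicalBasis

theorem eq_pbw (hB : IsDualCanonicalBasis q u σ B) (ha : Sset a = ∅) : B a = pbw q u a := by
  simpa [ha, pbwSpan, sub_eq_zero] using hB.sub_pbw_mem a

theorem qCommute_of_pbw_eq_mul (hB : IsDualCanonicalBasis q u σ B) (hσ : IsBarAntihom q u σ)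
    (hq : q ≠ 0) (ha : Sset a = ∅) {i j : Fin 4} (hpbw : pbw q u a = u j * u i)
    (hN : -Nnum a + 2 = (2 * i + 2 * j : ℕ)) : QCommute (q⁻¹ ^ 2) (u i) (u j) := by
  have hσB := hB.map_eq a
  rw [hB.eq_pbw ha, hpbw, hσ.map_mul, hσ.map_gen, hσ.map_gen, smul_mul_smul_comm, ← pow_add,
    ← zpow_natCast, ← hN, zpow_add₀ hq, zpow_ofNat, mul_smul] at hσB
  have hsq : q ^ 2 • (u i * u j) = u j * u i :=
    smul_right_injective R (zpow_ne_zero (-Nnum a) hq) hσB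
  rw [QCommute, ← hsq, smul_smul, ← mul_pow, inv_mul_cancel₀ hq, one_pow, one_smul]

theorem qCommute_zero_one (hB : IsDualCanonicalBasis q u σ B) (hσ : IsBarAntihom q u σ)
    (hq : q ≠ 0) : QCommute (q⁻¹ ^ 2) (u 0) (u 1) := by
  refine hB.qCommute_of_pbw_eq_mul hσ hq (a := (0, 0, 1, 1))
    (Sset_eq_empty (w := 1) (w' := 5) (by simp [weightIdx]) ?_) (by simp [pbw, bexp])
    (by simp [Nnum])
  rintro ⟨i, j, k, l⟩ hb
  simp only [weightIdx, Set.mem_ofPred_eq, outerDegree] at hb ⊢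
  omega

theorem qCommute_one_two (hB : IsDualCanonicalBasis q u σ B) (hσ : IsBarAntihom q u σ)
    (hq : q ≠ 0) : QCommute (q⁻¹ ^ 2) (u 1) (u 2) :=
  hB.qCommute_of_pbw_eq_mul hσ hq (a := (0, 1, 1, 0))
    (Sset_eq_empty (w := 3) (w' := 3) (by simp [weightIdx]) fun _ _ => Nat.zero_le _)
    (by simp [pbw, bexp]) (by simp [Nnum])

theorem qCommute_two_three (hB : IsDualCanonicalBasis q u σ B) (hσ : IsBarAntihom q u σ)
    (hq : q ≠ 0) : QCommute (q⁻¹ ^ 2) (u 2) (u 3) := by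
  refine hB.qCommute_of_pbw_eq_mul hσ hq (a := (1, 1, 0, 0))
    (Sset_eq_empty (w := 5) (w' := 1) (by simp [weightIdx]) ?_) (by simp [pbw, bexp])
    (by simp [Nnum])
  rintro ⟨i, j, k, l⟩ hb
  simp only [weightIdx, Set.mem_ofPred_eq, outerDegree] at hb ⊢
  omega

end IsDualCanonicalBasis

end AdjacentRelations

section Derivation

variable {R' : Type*} [Ring R'] [Algebra K R'] {f : R →ₐ[K] R'} {D : R →ₗ[K] R'} {c : K}

theorem mul_eq_of_qCommute_of_leibniz (hf : Function.Injective f)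
    (hD : ∀ x y, D (x * y) = D x * f y + f x * D y) (hc : c ≠ 0) {r : K} {x y z : R}
    (hxy : QCommute r x y) (hx : D x = c • f y) (hy : D y = c • f z) :
    x * z = r • (z * x) + (r - 1) • (y * y) := by
  have hDxy := congrArg D hxy
  simp only [map_smul, hD, hx, hy, smul_mul_assoc, mul_smul_comm] at hDxy
  refine hf (smul_right_injective R' hc ?_)
  simp only [map_add, map_smul, map_mul]
  linear_combination (norm := module) hDxy

theorem straighteningRel_of_leibniz (hf : Function.Injective f)
    (hD : ∀ x y, D (x * y) = D x * f y + f x * D y) (hc : c ≠ 0) {q : K} {u : Fin 4 → R}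
    (hDu : ∀ i : Fin 3, D (u i.castSucc) = c • f (u i.succ)) (hq : q ≠ 0)
    (h01 : QCommute (q⁻¹ ^ 2) (u 0) (u 1)) (h12 : QCommute (q⁻¹ ^ 2) (u 1) (u 2))
    (h23 : QCommute (q⁻¹ ^ 2) (u 2) (u 3)) : StraighteningRel q u := by
  have hD0 : D (u 0) = c • f (u 1) := hDu 0
  have hD1 : D (u 1) = c • f (u 2) := hDu 1
  have hD2 : D (u 2) = c • f (u 3) := hDu 2
  have h02 := mul_eq_of_qCommute_of_leibniz hf hD hc h01 hD0 hD1
  refine ⟨hq, h01, h12, h23, h02, mul_eq_of_qCommute_of_leibniz hf hD hc h12 hD1 hD2, ?_⟩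
  have hD02 := congrArg D h02
  have hf12 := congrArg f h12
  simp only [map_add, map_smul, map_mul, hD, hD0, hD1, hD2, smul_mul_assoc, mul_smul_comm]
    at hD02 hf12
  refine hf (smul_right_injective R' hc ?_)
  simp only [map_add, map_smul, map_mul]
  rw [hf12] at hD02
  linear_combination (norm := module) hD02

end Derivation

/-! ### The algebra `S` -/

section Concrete

theorem transcendental_int {k : Type*} [Field k] [CharZero k] {_ : Algebra k K} {x : K}
    (hx : Transcendental k x) : Transcendental ℤ x :=
  hx.restrictScalars (algebraMap ℤ k).injective_int

theorem commutator_inv_pow_smul {c : K} (hc : c ≠ 0) (A x : R) (k : ℕ) :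
    A * (c⁻¹ ^ k • x) - (c⁻¹ ^ k • x) * A = c ^ 2 • c⁻¹ ^ (k + 2) • (A * x - x * A) := by
  rw [mul_smul_comm, smul_mul_assoc, ← smul_sub, smul_smul, pow_add, mul_left_comm, ← mul_pow,
    mul_inv_cancel₀ hc, one_pow, mul_one]

theorem one_sub_inv_sq_ne_zero {q : K} (hq : Transcendental ℤ q) : 1 - q⁻¹ ^ 2 ≠ 0 := by
  intro h
  have hsq : q ^ 2 = 1 := by rw [← inv_inj, inv_one, ← inv_pow, sub_eq_zero.1 h]
  exact hq.pow two_pos (hsq ▸ isAlgebraic_one)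

theorem qq_ne_zero : qq ≠ 0 := RatFunc.X_ne_zero

theorem one_sub_inv_qq_sq_ne_zero : 1 - qq⁻¹ ^ 2 ≠ 0 :=
  one_sub_inv_sq_ne_zero (transcendental_int RatFunc.transcendental_X)

/-- The generators `u₀, u₁, u₂, u₃` of `S` as a family. -/
def sgens : Fin 4 → Sgen := ![us0, us1, us2, us3]

theorem pbw_sgens : pbw qq sgens = Ee := rfl

/-- The restriction to `S` of the commutator with `A`. -/
def commutatorA : Sgen →ₗ[F] U :=
  (LinearMap.mulLeft F Aelt - LinearMap.mulRight F Aelt).comp Sgen.val.toLinearMap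

theorem commutatorA_mul (x y : Sgen) :
    commutatorA (x * y) = commutatorA x * Sgen.val y + Sgen.val x * commutatorA y := by
  simp [commutatorA, sub_mul, mul_sub, mul_assoc]

theorem commutatorA_sgens (i : Fin 3) :
    commutatorA (sgens i.castSucc) = (1 - qq⁻¹ ^ 2) ^ 2 • Sgen.val (sgens i.succ) := by
  have hc := one_sub_inv_qq_sq_ne_zero
  fin_cases i
  · have hv := commutator_inv_pow_smul hc Aelt v0 0
    rw [pow_zero, one_smul] at hv
    exact hv
  · exact commutator_inv_pow_smul hc Aelt v1 2
  · exact commutator_inv_pow_smul hc Aelt v2 4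

variable {bar : F →+* F} {σ : Sgen → Sgen} {B : Idx → Sgen}

/-- The map `σ` as a bundled semilinear map. -/
def SigmaHyp.toSemilinear (hσ : SigmaHyp bar σ) : Sgen →ₛₗ[bar] Sgen where
  toFun := σ
  map_add' := hσ.2.2.1
  map_smul' := hσ.2.2.2.2.1

theorem SigmaHyp.isBarAntihom (hσ : SigmaHyp bar σ) : IsBarAntihom qq sgens hσ.toSemilinear := by
  obtain ⟨hbar, -, -, hmul, -, h0, h1, h2, h3⟩ := id hσ
  refine ⟨hbar, hmul, fun i => ?_⟩
  fin_cases i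
  exacts [h0.trans (by simp [sgens]), h1, h2, h3]

theorem linearIndependent_Ee (hPBW : LinearIndependent F mon) : LinearIndependent F Ee :=
  hPBW.units_smul fun a => Units.mk0 (qq ^ bexp a) (pow_ne_zero _ qq_ne_zero)

open Pointwise in
theorem cond1.sub_pbw_mem {a : Idx} (h : cond1 B a) :
    B a - pbw qq sgens a ∈ qq • pbwSpan qq sgens (Sset a) := by
  obtain ⟨φ, hφ, hBa⟩ := h
  rw [pbw_sgens, hBa]
  refine sum_mem fun b hb => ?_
  simp only [mul_smul]
  exact smul_mem_smul_pbwSpan (eval₂_smul_mem_pbwSpan (φ b) (pbw_mem_pbwSpan (hφ hb)))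

theorem DCB.isDualCanonicalBasis (hB : DCB bar σ B) (hσ : SigmaHyp bar σ)
    (hPBW : LinearIndependent F mon) : IsDualCanonicalBasis qq sgens hσ.toSemilinear B where
  linearIndependent := linearIndependent_Ee hPBW
  sub_pbw_mem a := (hB a).1.sub_pbw_mem
  map_eq a := (hB a).2

theorem DCB.straighteningRel (hB : DCB bar σ B) (hσ : SigmaHyp bar σ)
    (hPBW : LinearIndependent F mon) : StraighteningRel qq sgens :=
  have hB' := hB.isDualCanonicalBasis hσ hPBW
  straighteningRel_of_leibniz (f := Sgen.val) Subtype.val_injective commutatorA_mul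
    (pow_ne_zero 2 one_sub_inv_qq_sq_ne_zero) commutatorA_sgens qq_ne_zero
    (hB'.qCommute_zero_one hσ.isBarAntihom qq_ne_zero)
    (hB'.qCommute_one_two hσ.isBarAntihom qq_ne_zero)
    (hB'.qCommute_two_three hσ.isBarAntihom qq_ne_zero)

theorem Bz_natCast (B : Idx → Sgen) (i j k l : ℕ) : Bz B (i, j, k, l) = B (i, j, k, l) := by
  simp [Bz]

end Concrete

/-- For every integer `n ≥ 1` the quantized cluster variables q-commute:
`B[n,0,0,n−1]·B[n+1,0,0,n] = q² · B[n+1,0,0,n]·B[n,0,0,n−1]`. -/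
theorem stmt15 (bar : F →+* F) (σ : Sgen → Sgen) (B : Idx → Sgen)
    (hPBW : LinearIndependent F mon) (hσ : SigmaHyp bar σ) (hB : DCB bar σ B) (n : ℕ) (hn : 1 ≤ n) :
    Bz B ((n : ℤ), 0, 0, (n : ℤ) - 1) * Bz B ((n : ℤ) + 1, 0, 0, (n : ℤ))
        = qq ^ 2 • (Bz B ((n : ℤ) + 1, 0, 0, (n : ℤ)) * Bz B ((n : ℤ), 0, 0, (n : ℤ) - 1)) := by
  obtain ⟨m, rfl⟩ := Nat.exists_eq_add_of_le' hn
  have hcomm := stmt15_general (q := qq) (transcendental_int RatFunc.transcendental_X)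
    (hB.straighteningRel hσ hPBW) hσ.isBarAntihom (hB.isDualCanonicalBasis hσ hPBW) m
  simpa [← Bz_natCast, QCommute, add_assoc, one_add_one_eq_two] using hcomm
end
end

section
/- For every integer n ≥ 2 the quantum exchange relation B[n+1,0,0,n]·B[n−1,0,0,n−2] = q² · B[n,0,0,n−1]² + q^{2n²−6n+8} p₁^{n+1} p₀^{n−2} holds. -/
noncomputable section

/-!
Write `t = q²`. The Serre relations imply that the four root vectors `u₀, …, u₃` satisfy quadratic
straightening relations, and everything else follows from these. With `z = u₃u₀ - q²u₂u₁` and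
`d = q⁻²p₁p₀`, which commute, the recurrence `xₙ₊₂ = xₙ₊₁z - xₙd` started at `u₃` and
`u₃z - q²u₂p₁` can also be written with `z` and `d` on the left, as `xₙ₊₂ = t z xₙ₊₁ - t² d xₙ`.
Comparing the two forms shows that the Casoratian `xₙ₊₂xₙ - q⁻²xₙ₊₁²` is multiplied by `t⁴d` at
each step, so it is a power of `q` times `p₁ⁿ⁺³p₀ⁿ`: this is the exchange relation.

It remains to see that a power of `q` times `xₙ` is `B[n+1,0,0,n]`. By a Lusztig-type argument,
an element of `E[a] + Σ qℤ[q] E[b]` that has the same `σ`-eigenvalue as `B[a]` equals `B[a]`.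
The eigenvalue of `xₙ` is found by applying `σ` to the recurrence, which exchanges its two forms.
Triangularity is proved together with that of the companion sequence `zₙ₊₂ = z zₙ₊₁ - d zₙ`:
each of the two sequences is obtained from the other by multiplications by `u₃`, `u₂p₁`, `u₀` and
`p₀u₁`, whose effect on the PBW monomials is explicit.
-/

namespace QuantumKronecker

/-! ### Root vectors from the quantized Serre relations -/

section QCommute

variable {K R : Type*} [CommRing K] [Ring R] [Algebra K R]

/-- `x` and `y` commute up to the scalar `c`: `x * y = c • (y * x)`. -/
def QCommute (c : K) (x y : R) : Prop := x * y = c • (y * x)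

namespace QCommute

variable {c c' : K} {x x' y y' : R}

theorem eq (h : QCommute c x y) : x * y = c • (y * x) := h

theorem mul_right (h : QCommute c x y) (h' : QCommute c' x y') :
    QCommute (c * c') x (y * y') := by
  rw [QCommute, ← mul_assoc, h.eq, smul_mul_assoc, mul_assoc, h'.eq, mul_smul_comm, smul_smul,
    mul_assoc]

theorem mul_left (h : QCommute c x y) (h' : QCommute c' x' y) :
    QCommute (c * c') (x * x') y := by
  rw [QCommute, mul_assoc, h'.eq, mul_smul_comm, ← mul_assoc, h.eq, smul_mul_assoc, smul_smul,
    mul_assoc, mul_comm c']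

theorem sub_right (h : QCommute c x y) (h' : QCommute c x y') : QCommute c x (y - y') := by
  rw [QCommute, mul_sub, h.eq, h'.eq, sub_mul, smul_sub]

theorem smul_right (h : QCommute c x y) (k : K) : QCommute c x (k • y) := by
  rw [QCommute, mul_smul_comm, h.eq, smul_mul_assoc, smul_comm]

theorem smul_left (h : QCommute c x y) (k : K) : QCommute c (k • x) y := by
  rw [QCommute, smul_mul_assoc, h.eq, mul_smul_comm, smul_comm]

theorem pow_right (h : QCommute c x y) : ∀ n : ℕ, QCommute (c ^ n) x (y ^ n)
  | 0 => by simp [QCommute]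
  | n + 1 => by
    rw [pow_succ c, pow_succ y]
    exact (h.pow_right n).mul_right h

theorem pow_left (h : QCommute c x y) : ∀ n : ℕ, QCommute (c ^ n) (x ^ n) y
  | 0 => by simp [QCommute]
  | n + 1 => by
    rw [pow_succ c, pow_succ x]
    exact (h.pow_left n).mul_left h

theorem commute (h : QCommute (1 : K) x y) : Commute x y := h.eq.trans (one_smul K _)

theorem symm {K : Type*} [Field K] [Algebra K R] {c : K} (h : QCommute c x y) (hc : c ≠ 0) :
    QCommute c⁻¹ y x := by
  rw [QCommute, h.eq, inv_smul_smul₀ hc]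

end QCommute

end QCommute

section Serre

variable {K R : Type*} [Field K] [Ring R] [Algebra K R]

/-- The quantized Serre relation between `a` and `b`, in the parameter `t = q²`. -/
def IsQuantumSerre (t : K) (a b : R) : Prop :=
  a ^ 3 * b - (t + 1 + t⁻¹) • (a ^ 2 * b * a) + (t + 1 + t⁻¹) • (a * b * a ^ 2) - b * a ^ 3 = 0

/-- The `q`-commutator `b a - t⁻¹ a b`, with `t = q²`. -/
def qBracket (t : K) (b a : R) : R := b * a - t⁻¹ • (a * b)

/-- The iterated commutators `ad(A)ⁿ(a)`. -/
def adSeq (A a : R) : ℕ → R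
  | 0 => a
  | n + 1 => ⁅A, adSeq A a n⁆

theorem adSeq_smul (c : K) (A a : R) : ∀ n : ℕ, adSeq (c • A) a n = c ^ n • adSeq A a n
  | 0 => by simp [adSeq]
  | n + 1 => by
    rw [adSeq, adSeq_smul c A a n, adSeq, Ring.lie_def, Ring.lie_def, smul_mul_smul_comm,
      smul_mul_smul_comm, ← pow_succ, ← pow_succ', smul_sub]

variable {t : K} {a b A A₂ : R}

theorem lie_qBracket_qCommute (ht : t ≠ 0) (hab : IsQuantumSerre t a b) :
    QCommute t ⁅qBracket t b a, a⁆ a := by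
  unfold IsQuantumSerre at hab
  rw [QCommute, qBracket]
  linear_combination (norm := skip) -hab
  simp only [Ring.lie_def, pow_succ, pow_zero, one_mul, mul_sub, sub_mul, smul_mul_assoc,
    mul_smul_comm, smul_sub, smul_smul, mul_assoc]
  match_scalars <;> field_simp <;> ring

-- `qBracket t b ⁅A, a⁆` is the second imaginary root vector. Since it commutes with the first one,
-- `A = qBracket t b a`, its action on `a` propagates along `ad A`, and this forces neighbouring
-- terms of `adSeq A a` to `q`-commute.
theorem qBracket_commute_qBracket_lie (ht : t ≠ 0) (ht₃ : t + 1 + t⁻¹ ≠ 0)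
    (hab : IsQuantumSerre t a b) (hba : IsQuantumSerre t b a) :
    Commute (qBracket t b a) (qBracket t b ⁅qBracket t b a, a⁆) := by
  unfold IsQuantumSerre at hab hba
  rw [commute_iff_eq, ← sub_eq_zero]
  refine (smul_eq_zero_iff_right ht₃).1 ?_
  linear_combination (norm := skip)
    b * b * hab - ((1 + t) * t⁻¹ ^ 2) • (b * hab * b) + t⁻¹ ^ 3 • (hab * (b * b))
      + t⁻¹ ^ 3 • (a * a * hba) - ((1 + t) * t⁻¹ ^ 2) • (a * hba * a) + hba * (a * a)
  simp only [qBracket, Ring.lie_def, pow_succ, pow_zero, one_mul, mul_sub, sub_mul, mul_add,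
    add_mul, smul_mul_assoc, mul_smul_comm, smul_sub, smul_add, smul_smul, mul_assoc, mul_zero,
    zero_mul, smul_zero]
  match_scalars <;> field_simp <;> ring

theorem lie_qBracket_eq (ht : t ≠ 0) {w : R} (hw : QCommute t w a) :
    ⁅qBracket t b w, a⁆ = t • (qBracket t b a * w) - t⁻¹ • (w * qBracket t b a) := by
  unfold QCommute at hw
  linear_combination (norm := skip) b * hw - t⁻¹ ^ 2 • (hw * b)
  simp only [qBracket, Ring.lie_def, mul_sub, sub_mul, smul_mul_assoc, mul_smul_comm, smul_sub,
    smul_smul, mul_assoc]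
  match_scalars <;> field_simp <;> ring

theorem lie_adSeq_eq (hA : Commute A A₂)
    (h : ⁅A₂, a⁆ = t • (A * ⁅A, a⁆) - t⁻¹ • (⁅A, a⁆ * A)) :
    ∀ n : ℕ, ⁅A₂, adSeq A a n⁆ =
      t • (A * adSeq A a (n + 1)) - t⁻¹ • (adSeq A a (n + 1) * A)
  | 0 => h
  | n + 1 => by
    have lie_comm (y : R) : ⁅A₂, ⁅A, y⁆⁆ = ⁅A, ⁅A₂, y⁆⁆ := by
      linear_combination (norm := (simp only [Ring.lie_def]; noncomm_ring))
        -hA.eq * y + y * hA.eq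
    calc ⁅A₂, adSeq A a (n + 1)⁆ = ⁅A, ⁅A₂, adSeq A a n⁆⁆ := lie_comm _
      _ = ⁅A, t • (A * adSeq A a (n + 1)) - t⁻¹ • (adSeq A a (n + 1) * A)⁆ := by
          rw [lie_adSeq_eq hA h n]
      _ = t • (A * ⁅A, adSeq A a (n + 1)⁆) - t⁻¹ • (⁅A, adSeq A a (n + 1)⁆ * A) := by
          simp only [Ring.lie_def, mul_sub, sub_mul, smul_mul_assoc, mul_smul_comm, smul_sub,
            mul_assoc]
          abel

theorem QCommute.lie_lie (ht : t ≠ 0) (ht₂ : t + t⁻¹ ≠ 0) {y : R}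
    (h : QCommute t ⁅A, y⁆ y)
    (hy : ⁅A₂, y⁆ = t • (A * ⁅A, y⁆) - t⁻¹ • (⁅A, y⁆ * A))
    (hy' : ⁅A₂, ⁅A, y⁆⁆ = t • (A * ⁅A, ⁅A, y⁆⁆) - t⁻¹ • (⁅A, ⁅A, y⁆⁆ * A)) :
    QCommute t ⁅A, ⁅A, y⁆⁆ ⁅A, y⁆ := by
  unfold QCommute at h ⊢
  rw [← sub_eq_zero]
  refine (smul_eq_zero_iff_right ht₂).1 ?_
  linear_combination (norm := skip)
    t • (A * A * h - (2 : K) • (A * h * A) + h * (A * A)) + (t - t⁻¹) • ((A * h - h * A) * A)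
      - (A₂ * h - h * A₂) + hy' * y + ⁅A, y⁆ * hy - t • (hy * ⁅A, y⁆) - t • (y * hy')
  simp only [Ring.lie_def, mul_sub, sub_mul, add_mul, smul_mul_assoc, mul_smul_comm, smul_sub,
    smul_add, smul_smul, mul_assoc]
  match_scalars <;> field_simp <;> ring

theorem lie_lie_mul_eq {y : R} (h : QCommute t ⁅A, y⁆ y) :
    ⁅A, ⁅A, y⁆⁆ * y = t • (y * ⁅A, ⁅A, y⁆⁆) + (t - 1) • ⁅A, y⁆ ^ 2 := by
  unfold QCommute at h
  linear_combination (norm := skip) A * h - h * A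
  simp only [Ring.lie_def, pow_two, mul_sub, sub_mul, smul_mul_assoc, mul_smul_comm, smul_sub,
    mul_assoc]
  match_scalars <;> ring

theorem lie_lie_lie_mul_eq {y : R} (h : QCommute t ⁅A, y⁆ y)
    (h' : QCommute t ⁅A, ⁅A, y⁆⁆ ⁅A, y⁆) :
    ⁅A, ⁅A, ⁅A, y⁆⁆⁆ * y
      = t • (y * ⁅A, ⁅A, ⁅A, y⁆⁆⁆) + (t ^ 2 - 1) • (⁅A, y⁆ * ⁅A, ⁅A, y⁆⁆) := by
  have h₂ := lie_lie_mul_eq h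
  unfold QCommute at h'
  linear_combination (norm := skip) A * h₂ - h₂ * A + (t - 2) • h'
  simp only [Ring.lie_def, pow_two, mul_sub, sub_mul, mul_add, add_mul, smul_mul_assoc,
    mul_smul_comm, smul_sub, smul_smul, mul_assoc]
  match_scalars <;> ring

theorem adSeq_succ_qCommute (ht : t ≠ 0) (ht₂ : t + t⁻¹ ≠ 0)
    (h₀ : QCommute t ⁅A, a⁆ a)
    (h : ∀ n : ℕ, ⁅A₂, adSeq A a n⁆ =
      t • (A * adSeq A a (n + 1)) - t⁻¹ • (adSeq A a (n + 1) * A)) :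
    ∀ n : ℕ, QCommute t (adSeq A a (n + 1)) (adSeq A a n)
  | 0 => h₀
  | n + 1 => (adSeq_succ_qCommute ht ht₂ h₀ h n).lie_lie ht ht₂ (h n) (h (n + 1))

end Serre

section Straightening

variable {K R : Type*} [Field K] [Ring R] [Algebra K R]

/-- The straightening relations among the four root vectors `u₀, u₁, u₂, u₃`, in the parameter
`t = q²`; the root vector `uᵢ` is `x i`. -/
structure StraighteningRelations (t : K) (x : Fin 4 → R) : Prop where
  one_zero : QCommute t (x 1) (x 0)
  two_one : QCommute t (x 2) (x 1)
  three_two : QCommute t (x 3) (x 2)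
  two_zero : x 2 * x 0 = t • (x 0 * x 2) + (t - 1) • x 1 ^ 2
  three_one : x 3 * x 1 = t • (x 1 * x 3) + (t - 1) • x 2 ^ 2
  three_zero : x 3 * x 0 = t • (x 0 * x 3) + (t ^ 2 - 1) • (x 1 * x 2)

/-- The quadratic element `p₁ = u₃u₁ − q²u₂²`. -/
def p₁ (t : K) (x : Fin 4 → R) : R := x 3 * x 1 - t • x 2 ^ 2

/-- The quadratic element `p₀ = u₂u₀ − q²u₁²`. -/
def p₀ (t : K) (x : Fin 4 → R) : R := x 2 * x 0 - t • x 1 ^ 2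

/-- The quadratic element `z = u₃u₀ − q²u₂u₁`, which turns out to be `B[1,0,0,1]`. -/
def z (t : K) (x : Fin 4 → R) : R := x 3 * x 0 - t • (x 2 * x 1)

/-- The element `d = q⁻²p₁p₀`, the constant term of the recurrences of `zSeq` and `xSeq`. -/
def d (t : K) (x : Fin 4 → R) : R := t⁻¹ • (p₁ t x * p₀ t x)

variable {t : K} {x : Fin 4 → R}

theorem IsQuantumSerre.straighteningRelations {a b : R} (ht : t ≠ 0) (ht₂ : t + t⁻¹ ≠ 0)
    (ht₃ : t + 1 + t⁻¹ ≠ 0) (hab : IsQuantumSerre t a b) (hba : IsQuantumSerre t b a) :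
    StraighteningRelations t fun i ↦ adSeq (qBracket t b a) a i := by
  have h₀ := lie_qBracket_qCommute ht hab
  have hA := qBracket_commute_qBracket_lie ht ht₃ hab hba
  have hcomm := adSeq_succ_qCommute ht ht₂ h₀ (lie_adSeq_eq hA (lie_qBracket_eq ht h₀))
  exact ⟨hcomm 0, hcomm 1, hcomm 2, lie_lie_mul_eq (hcomm 0), lie_lie_mul_eq (hcomm 1),
    lie_lie_lie_mul_eq (hcomm 0) (hcomm 1)⟩

namespace StraighteningRelations

theorem pow_smul (h : StraighteningRelations t x) (c : K) :
    StraighteningRelations t fun i ↦ c ^ (i : ℕ) • x i where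
  one_zero := (h.one_zero.smul_left _).smul_right _
  two_one := (h.two_one.smul_left _).smul_right _
  three_two := (h.three_two.smul_left _).smul_right _
  two_zero := by
    simp only [Fin.isValue, Fin.coe_ofNat_eq_mod, smul_mul_smul_comm, smul_pow, h.two_zero]
    match_scalars <;> ring
  three_one := by
    simp only [Fin.isValue, Fin.coe_ofNat_eq_mod, smul_mul_smul_comm, smul_pow, h.three_one]
    match_scalars <;> ring
  three_zero := by
    simp only [Fin.isValue, Fin.coe_ofNat_eq_mod, smul_mul_smul_comm, h.three_zero]
    match_scalars <;> ring

theorem op (h : StraighteningRelations t x) :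
    StraighteningRelations t fun i ↦ MulOpposite.op (x i.rev) where
  one_zero := congrArg MulOpposite.op h.three_two.eq
  two_one := congrArg MulOpposite.op h.two_one.eq
  three_two := congrArg MulOpposite.op h.one_zero.eq
  two_zero := congrArg MulOpposite.op h.three_one
  three_one := congrArg MulOpposite.op h.two_zero
  three_zero := congrArg MulOpposite.op h.three_zero

theorem qCommute_p₁_x₃ (ht : t ≠ 0) (h : StraighteningRelations t x) :
    QCommute t⁻¹ (p₁ t x) (x 3) := by
  have R₃₂ := h.three_two.eq
  rw [QCommute, p₁]
  linear_combination (norm := skip) t⁻¹ • (-x 3 * h.three_one + R₃₂ * x 2) + x 2 * R₃₂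
  simp only [neg_mul, mul_sub, sub_mul, mul_add, smul_mul_assoc, mul_smul_comm, smul_add,
    smul_sub, smul_neg, smul_smul, pow_two, mul_assoc]
  match_scalars <;> field_simp <;> ring

theorem qCommute_p₁_x₂ (ht : t ≠ 0) (h : StraighteningRelations t x) :
    QCommute (1 : K) (p₁ t x) (x 2) := by
  have R₃₂ := h.three_two.eq
  have R₂₁ := h.two_one.eq
  rw [QCommute, p₁]
  linear_combination (norm := skip) t⁻¹ • (R₃₂ * x 1 - x 3 * R₂₁)
  simp only [mul_sub, sub_mul, smul_mul_assoc, mul_smul_comm, smul_sub, smul_smul, pow_two,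
    mul_assoc]
  match_scalars <;> field_simp <;> ring

theorem qCommute_p₁_x₁ (h : StraighteningRelations t x) : QCommute t (p₁ t x) (x 1) := by
  have R₂₁ := h.two_one.eq
  rw [QCommute, p₁]
  linear_combination (norm := skip) h.three_one * x 1 - x 2 * R₂₁ - t • (R₂₁ * x 2)
  simp only [mul_sub, sub_mul, add_mul, smul_mul_assoc, mul_smul_comm,
    smul_sub, smul_smul, pow_two, mul_assoc]
  match_scalars <;> ring

theorem qCommute_p₁_x₀ (h : StraighteningRelations t x) : QCommute (t ^ 2) (p₁ t x) (x 0) := by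
  have R₁₀ := h.one_zero.eq
  have R₂₁ := h.two_one.eq
  rw [QCommute, p₁]
  linear_combination (norm := skip) x 3 * R₁₀ + t • (h.three_zero * x 1)
    - t • (x 2 * h.two_zero) - t ^ 2 • (h.two_zero * x 2)
    + (t * (t - 1)) • (x 1 * R₂₁ - R₂₁ * x 1)
  simp only [mul_sub, sub_mul, mul_add, add_mul, smul_mul_assoc, mul_smul_comm, smul_add,
    smul_sub, smul_smul, pow_two, mul_assoc]
  match_scalars <;> ring

-- The relations for `p₀` are those for `p₁` in the opposite algebra.
theorem qCommute_x₀_p₀ (ht : t ≠ 0) (h : StraighteningRelations t x) :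
    QCommute t⁻¹ (x 0) (p₀ t x) :=
  congrArg MulOpposite.unop (h.op.qCommute_p₁_x₃ ht).eq

theorem qCommute_x₁_p₀ (ht : t ≠ 0) (h : StraighteningRelations t x) :
    QCommute (1 : K) (x 1) (p₀ t x) :=
  congrArg MulOpposite.unop (h.op.qCommute_p₁_x₂ ht).eq

theorem qCommute_x₂_p₀ (h : StraighteningRelations t x) : QCommute t (x 2) (p₀ t x) :=
  congrArg MulOpposite.unop h.op.qCommute_p₁_x₁.eq

theorem qCommute_x₃_p₀ (h : StraighteningRelations t x) : QCommute (t ^ 2) (x 3) (p₀ t x) :=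
  congrArg MulOpposite.unop h.op.qCommute_p₁_x₀.eq

theorem x₃_mul_z (ht : t ≠ 0) (h : StraighteningRelations t x) :
    x 3 * z t x = t • (z t x * x 3) + (t - 1) • (x 2 * p₁ t x) := by
  have R₃₂ := h.three_two.eq
  have R₂₁ := h.two_one.eq
  rw [z, p₁]
  linear_combination (norm := skip) x 3 * h.three_zero - t • (x 2 * h.three_one)
    - t⁻¹ • (R₃₂ * x 1) - (t - t⁻¹) • (x 3 * R₂₁)
  simp only [mul_sub, sub_mul, mul_add, smul_mul_assoc, mul_smul_comm, smul_add,
    smul_sub, smul_smul, pow_two, mul_assoc]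
  match_scalars <;> field_simp <;> ring

theorem x₃_mul_p₀ (h : StraighteningRelations t x) :
    x 3 * p₀ t x = t • (z t x * x 2) - p₁ t x * x 1 := by
  have R₂₁ := h.two_one.eq
  rw [z, p₁, p₀]
  linear_combination (norm := skip) x 3 * h.two_zero - t • (x 2 * R₂₁)
  simp only [mul_sub, sub_mul, mul_add, smul_mul_assoc, mul_smul_comm, smul_sub, smul_smul,
    pow_two, mul_assoc]
  match_scalars <;> ring

theorem x₂_mul_z (h : StraighteningRelations t x) :
    t • (x 2 * z t x) = t ^ 2 • (z t x * x 2) - (t - 1) • (x 3 * p₀ t x) := by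
  have R₃₂ := h.three_two.eq
  linear_combination (norm := skip) t • h.x₃_mul_p₀ - R₃₂ * x 0
  simp only [z, p₁, p₀, mul_sub, sub_mul, smul_mul_assoc, mul_smul_comm,
    smul_sub, smul_smul, pow_two, mul_assoc]
  match_scalars <;> ring

theorem p₁_sq (ht : t ≠ 0) (h : StraighteningRelations t x) :
    p₁ t x ^ 2 = (x 3 * z t x - t • (x 2 * p₁ t x)) * x 2 - t⁻¹ • (x 3 * (x 3 * p₀ t x)) := by
  have hp₁x₃ := (h.qCommute_p₁_x₃ ht).eq
  have hp₁x₂ := (h.qCommute_p₁_x₂ ht).eq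
  calc p₁ t x ^ 2 = p₁ t x * x 3 * x 1 - t • (p₁ t x * x 2 * x 2) := by
        rw [pow_two]
        nth_rw 2 [p₁]
        rw [mul_sub, mul_smul_comm, pow_two, mul_assoc, mul_assoc]
    _ = t⁻¹ • (x 3 * p₁ t x * x 1) - t • (x 2 * p₁ t x * x 2) := by
        rw [hp₁x₃, hp₁x₂, one_smul, smul_mul_assoc]
    _ = _ := by
        rw [h.x₃_mul_p₀]
        simp only [mul_sub, sub_mul, smul_mul_assoc, mul_smul_comm, smul_sub, mul_assoc,
          inv_smul_smul₀ ht]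
        abel

theorem qCommute_p₁_z (ht : t ≠ 0) (h : StraighteningRelations t x) :
    QCommute t (p₁ t x) (z t x) := by
  have h₃₀ : QCommute t (p₁ t x) (x 3 * x 0) := by
    convert (h.qCommute_p₁_x₃ ht).mul_right h.qCommute_p₁_x₀ using 1
    field_simp
  have h₂₁ : QCommute t (p₁ t x) (x 2 * x 1) := by
    convert (h.qCommute_p₁_x₂ ht).mul_right h.qCommute_p₁_x₁ using 1
    rw [one_mul]
  exact h₃₀.sub_right (h₂₁.smul_right t)

theorem qCommute_z_p₀ (ht : t ≠ 0) (h : StraighteningRelations t x) :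
    QCommute t (z t x) (p₀ t x) :=
  congrArg MulOpposite.unop (h.op.qCommute_p₁_z ht).eq

theorem qCommute_p₁_p₀ (ht : t ≠ 0) (h : StraighteningRelations t x) :
    QCommute (t ^ 2) (p₁ t x) (p₀ t x) := by
  have h₂₀ : QCommute (t ^ 2) (p₁ t x) (x 2 * x 0) := by
    convert (h.qCommute_p₁_x₂ ht).mul_right h.qCommute_p₁_x₀ using 1
    rw [one_mul]
  exact h₂₀.sub_right ((h.qCommute_p₁_x₁.pow_right 2).smul_right t)

theorem d_eq (ht : t ≠ 0) (h : StraighteningRelations t x) : d t x = t • (p₀ t x * p₁ t x) := by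
  rw [d, (h.qCommute_p₁_p₀ ht).eq, smul_smul, pow_two, inv_mul_cancel_left₀ ht]

theorem qCommute_d_x₃ (ht : t ≠ 0) (h : StraighteningRelations t x) :
    QCommute (t⁻¹ ^ 3) (d t x) (x 3) := by
  have hp₀x₃ := h.qCommute_x₃_p₀.symm (pow_ne_zero 2 ht)
  rw [d]
  convert ((h.qCommute_p₁_x₃ ht).mul_left hp₀x₃).smul_left t⁻¹ using 1
  ring

theorem qCommute_d_x₂ (ht : t ≠ 0) (h : StraighteningRelations t x) :
    QCommute t⁻¹ (d t x) (x 2) := by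
  rw [d]
  convert ((h.qCommute_p₁_x₂ ht).mul_left (h.qCommute_x₂_p₀.symm ht)).smul_left t⁻¹ using 1
  ring

theorem qCommute_d_p₁ (ht : t ≠ 0) (h : StraighteningRelations t x) :
    QCommute (t⁻¹ ^ 2) (d t x) (p₁ t x) := by
  have hp₁ : QCommute (1 : K) (p₁ t x) (p₁ t x) := (one_smul K _).symm
  rw [d]
  convert (hp₁.mul_left ((h.qCommute_p₁_p₀ ht).symm (pow_ne_zero 2 ht))).smul_left t⁻¹ using 1
  ring

theorem commute_d_z (ht : t ≠ 0) (h : StraighteningRelations t x) : Commute (d t x) (z t x) := by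
  have hd := ((h.qCommute_p₁_z ht).mul_left ((h.qCommute_z_p₀ ht).symm ht)).smul_left t⁻¹
  rw [mul_inv_cancel₀ ht] at hd
  exact hd.commute

end StraighteningRelations

end Straightening

/-! ### The recurrences and the Casoratian -/

section Sequences

variable {K R : Type*} [Field K] [Ring R] [Algebra K R]

/-- The sequence `1, z, z² - d, …` of Chebyshev type, given by `zₙ₊₂ = z zₙ₊₁ - d zₙ`; up to a
power of `q`, its terms are the `B[n,0,0,n]`. -/
def zSeq (t : K) (x : Fin 4 → R) : ℕ → R
  | 0 => 1
  | 1 => z t x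
  | n + 2 => z t x * zSeq t x (n + 1) - d t x * zSeq t x n

/-- The sequence starting with `u₃` and `u₃z - q²u₂p₁`, given by `xₙ₊₂ = xₙ₊₁ z - xₙ d`; up to a
power of `q`, its terms are the cluster variables `B[n+1,0,0,n]`. -/
def xSeq (t : K) (x : Fin 4 → R) : ℕ → R
  | 0 => x 3
  | 1 => x 3 * z t x - t • (x 2 * p₁ t x)
  | n + 2 => xSeq t x (n + 1) * z t x - xSeq t x n * d t x

/-- The Casoratian `xₘ₊₂xₘ - q⁻²xₘ₊₁²` of `xSeq`, a non-commutative analogue of the Wronskian. -/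
def casoratian (t : K) (x : Fin 4 → R) (m : ℕ) : R :=
  xSeq t x (m + 2) * xSeq t x m - t⁻¹ • xSeq t x (m + 1) ^ 2

variable {t : K} {x : Fin 4 → R}

theorem commute_zSeq {y : R} (hz : Commute y (z t x)) (hd : Commute y (d t x)) :
    ∀ n, Commute y (zSeq t x n)
  | 0 => Commute.one_right y
  | 1 => hz
  | n + 2 => (hz.mul_right (commute_zSeq hz hd (n + 1))).sub_right
      (hd.mul_right (commute_zSeq hz hd n))

namespace StraighteningRelations

theorem zSeq_add_two (ht : t ≠ 0) (h : StraighteningRelations t x) (n : ℕ) :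
    zSeq t x (n + 2) = zSeq t x (n + 1) * z t x - zSeq t x n * d t x := by
  have hdz := h.commute_d_z ht
  rw [zSeq, (commute_zSeq (Commute.refl _) hdz.symm _).eq,
    (commute_zSeq hdz (Commute.refl _) _).eq]

theorem xSeq_succ (ht : t ≠ 0) (h : StraighteningRelations t x) :
    ∀ n, xSeq t x (n + 1) = x 3 * zSeq t x (n + 1) - t • (x 2 * p₁ t x * zSeq t x n)
  | 0 => by rw [xSeq, zSeq, zSeq, mul_one]
  | 1 => by
    rw [h.zSeq_add_two ht, xSeq, xSeq, xSeq, zSeq, zSeq]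
    simp only [mul_sub, sub_mul, smul_mul_assoc, mul_assoc, one_mul]
    abel
  | n + 2 => by
    linear_combination (norm := skip) h.xSeq_succ ht (n + 1) * z t x - h.xSeq_succ ht n * d t x
      - x 3 * h.zSeq_add_two ht (n + 1) + t • (x 2 * p₁ t x * h.zSeq_add_two ht n)
    simp only [xSeq, mul_sub, sub_mul, smul_mul_assoc, mul_assoc, smul_sub]
    module

theorem xSeq_one (ht : t ≠ 0) (h : StraighteningRelations t x) :
    xSeq t x 1 = t • (z t x * x 3) - x 2 * p₁ t x := by
  rw [xSeq, h.x₃_mul_z ht]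
  module

theorem qCommute_d_xSeq (ht : t ≠ 0) (h : StraighteningRelations t x) :
    ∀ n, QCommute (t⁻¹ ^ 3) (d t x) (xSeq t x n)
  | 0 => h.qCommute_d_x₃ ht
  | 1 => by
    have hz : QCommute (1 : K) (d t x) (z t x) :=
      (h.commute_d_z ht).eq.trans (one_smul K _).symm
    have h₃ := (h.qCommute_d_x₃ ht).mul_right hz
    have h₂ := (h.qCommute_d_x₂ ht).mul_right (h.qCommute_d_p₁ ht)
    rw [mul_one] at h₃
    rw [← pow_succ'] at h₂
    exact h₃.sub_right (h₂.smul_right t)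
  | n + 2 => by
    have hz : QCommute (1 : K) (d t x) (z t x) :=
      (h.commute_d_z ht).eq.trans (one_smul K _).symm
    have hd : QCommute (1 : K) (d t x) (d t x) := (one_smul K _).symm
    have h₁ := (h.qCommute_d_xSeq ht (n + 1)).mul_right hz
    have h₀ := (h.qCommute_d_xSeq ht n).mul_right hd
    rw [mul_one] at h₁ h₀
    exact h₁.sub_right h₀

theorem xSeq_two (ht : t ≠ 0) (h : StraighteningRelations t x) :
    xSeq t x 2 = t • (z t x * xSeq t x 1) - t ^ 2 • (d t x * xSeq t x 0) := by
  have hp₁z := (h.qCommute_p₁_z ht).eq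
  have hdx₃ := (h.qCommute_d_x₃ ht).eq
  have hd := h.d_eq ht
  calc xSeq t x 2 = (t • (z t x * x 3) - x 2 * p₁ t x) * z t x - x 3 * d t x := by
        rw [xSeq, h.xSeq_one ht, xSeq]
    _ = t • (z t x * (x 3 * z t x - t • (x 2 * p₁ t x))) - t ^ 2 • (d t x * x 3) := by
        linear_combination (norm := skip) -x 2 * hp₁z - h.x₂_mul_z * p₁ t x
          + t ^ 2 • hdx₃ + (t⁻¹ - 1) • (x 3 * hd)
        simp only [neg_mul, mul_sub, sub_mul, smul_mul_assoc, mul_smul_comm, smul_smul, smul_sub,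
          mul_assoc]
        match_scalars <;> field_simp <;> ring

theorem xSeq_add_two (ht : t ≠ 0) (h : StraighteningRelations t x) :
    ∀ n, xSeq t x (n + 2) = t • (z t x * xSeq t x (n + 1)) - t ^ 2 • (d t x * xSeq t x n)
  | 0 => h.xSeq_two ht
  | 1 => by
    have hd := ((h.qCommute_d_x₂ ht).mul_right (h.qCommute_d_p₁ ht)).eq
    have h₁ : xSeq t x 1 = x 3 * z t x - t • (x 2 * p₁ t x) := rfl
    have h₂ : xSeq t x 2 = xSeq t x 1 * z t x - x 3 * d t x := rfl
    have h₃ : xSeq t x 3 = xSeq t x 2 * z t x - xSeq t x 1 * d t x := rfl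
    linear_combination (norm := skip) h₃ + h.xSeq_two ht * z t x - t • (z t x * h₂)
      + t ^ 2 • (d t x * h₁) - h.xSeq_one ht * d t x - t ^ 3 • hd
    simp only [xSeq, mul_sub, sub_mul, smul_mul_assoc, mul_smul_comm, smul_smul, smul_sub,
      mul_assoc]
    match_scalars <;> field_simp <;> ring
  | n + 2 => by
    linear_combination (norm := skip) h.xSeq_add_two ht (n + 1) * z t x
      - h.xSeq_add_two ht n * d t x
    simp only [xSeq, mul_sub, sub_mul, smul_mul_assoc, mul_assoc, smul_sub]
    module

theorem zSeq_two (ht : t ≠ 0) (h : StraighteningRelations t x) :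
    zSeq t x 2 = t⁻¹ • (xSeq t x 1 * x 0) - x 3 * p₀ t x * x 1 := by
  have hp₁x₂ := (h.qCommute_p₁_x₂ ht).eq
  rw [h.xSeq_one ht, zSeq, zSeq, zSeq, mul_one]
  linear_combination (norm := skip) h.x₃_mul_p₀ * x 1 - t⁻¹ • (hp₁x₂ * x 0)
  simp only [d, z, p₀, mul_sub, sub_mul, smul_mul_assoc, mul_smul_comm, smul_smul, smul_sub,
    mul_assoc, pow_two]
  match_scalars <;> field_simp <;> ring

theorem zSeq_add_two_eq_xSeq (ht : t ≠ 0) (h : StraighteningRelations t x) :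
    ∀ n, zSeq t x (n + 2) = t⁻¹ ^ (n + 1) • (xSeq t x (n + 1) * x 0)
      - t⁻¹ ^ n • (xSeq t x n * p₀ t x * x 1)
  | 0 => by simpa only [zero_add, pow_one, pow_zero, one_smul, xSeq] using h.zSeq_two ht
  | 1 => by
    have hdx₂ := (h.qCommute_d_x₂ ht).eq
    have hz₃ : zSeq t x 3 = z t x * zSeq t x 2 - d t x * z t x := rfl
    have hX₀ : xSeq t x 0 = x 3 := rfl
    have hdz : d t x * z t x = d t x * (x 3 * x 0) - t • (d t x * (x 2 * x 1)) := by
      rw [z, mul_sub, mul_smul_comm]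
    rw [hz₃, hdz, h.zSeq_two ht, h.xSeq_two ht, h.xSeq_one ht, hX₀]
    linear_combination (norm := skip) t • (hdx₂ * x 1)
    simp only [d, mul_sub, sub_mul, smul_mul_assoc, mul_smul_comm, smul_smul, smul_sub, mul_assoc,
      inv_pow]
    match_scalars <;> field_simp <;> ring
  | n + 2 => by
    have hz : zSeq t x (n + 4) = z t x * zSeq t x (n + 3) - d t x * zSeq t x (n + 2) := rfl
    linear_combination (norm := skip) hz + z t x * h.zSeq_add_two_eq_xSeq ht (n + 1)
      - d t x * h.zSeq_add_two_eq_xSeq ht n - t⁻¹ ^ (n + 3) • (h.xSeq_add_two ht (n + 1) * x 0)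
      + t⁻¹ ^ (n + 2) • (h.xSeq_add_two ht n * p₀ t x * x 1)
    simp only [mul_sub, sub_mul, smul_mul_assoc, mul_smul_comm, smul_smul, smul_sub, mul_assoc,
      inv_pow]
    match_scalars <;> field_simp <;> ring

theorem casoratian_zero (ht : t ≠ 0) (h : StraighteningRelations t x) :
    casoratian t x 0 = t⁻¹ • p₁ t x ^ 3 := by
  have hdx₃ := (h.qCommute_d_x₃ ht).eq
  have hX₀ : xSeq t x 0 = x 3 := rfl
  have hX₁ : xSeq t x 1 = x 3 * z t x - t • (x 2 * p₁ t x) := rfl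
  have hX₂ : xSeq t x 2 = xSeq t x 1 * z t x - x 3 * d t x := rfl
  rw [casoratian, hX₀, hX₂, pow_succ (p₁ t x), h.p₁_sq ht, ← hX₁, zero_add]
  linear_combination (norm := skip) -t⁻¹ • (xSeq t x 1 * h.xSeq_one ht) - x 3 * hdx₃
    - t⁻¹ ^ 3 • (x 3 * x 3 * h.d_eq ht)
  simp only [mul_sub, sub_mul, smul_mul_assoc, mul_smul_comm, smul_smul, smul_sub, mul_assoc,
    pow_two]
  match_scalars <;> field_simp <;> ring

theorem casoratian_succ (ht : t ≠ 0) (h : StraighteningRelations t x) (m : ℕ) :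
    casoratian t x (m + 1) = t ^ 4 • (d t x * casoratian t x m) := by
  have hd₁ := (h.qCommute_d_xSeq ht (m + 1)).eq
  have hd₂ := (h.qCommute_d_xSeq ht (m + 2)).eq
  have hX : xSeq t x (m + 3) = xSeq t x (m + 2) * z t x - xSeq t x (m + 1) * d t x := rfl
  rw [casoratian, casoratian]
  linear_combination (norm := skip) hX * xSeq t x (m + 1)
    - t⁻¹ • (xSeq t x (m + 2) * h.xSeq_add_two ht m)
    + t ^ 3 • (hd₁ * xSeq t x (m + 1)) - t ^ 4 • (hd₂ * xSeq t x m)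
  simp only [mul_sub, sub_mul, smul_mul_assoc, mul_smul_comm, smul_smul, smul_sub, mul_assoc,
    pow_two]
  match_scalars <;> field_simp <;> ring

theorem casoratian_eq (ht : t ≠ 0) (h : StraighteningRelations t x) :
    ∀ m, casoratian t x m = t⁻¹ ^ (m + 1) ^ 2 • (p₁ t x ^ (m + 3) * p₀ t x ^ m)
  | 0 => by simpa using h.casoratian_zero ht
  | m + 1 => by
    have hp := (((h.qCommute_p₁_p₀ ht).symm (pow_ne_zero 2 ht)).pow_right (m + 3)).eq
    calc casoratian t x (m + 1)
        = (t ^ 4 * t⁻¹ ^ (m + 1) ^ 2 * t⁻¹) •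
            (p₁ t x * (p₀ t x * p₁ t x ^ (m + 3)) * p₀ t x ^ m) := by
          rw [h.casoratian_succ ht, h.casoratian_eq ht m, d]
          simp only [smul_mul_assoc, mul_smul_comm, smul_smul, mul_assoc]
      _ = (t ^ 4 * t⁻¹ ^ (m + 1) ^ 2 * t⁻¹ * (t ^ 2)⁻¹ ^ (m + 3)) •
            (p₁ t x ^ (m + 1 + 3) * p₀ t x ^ (m + 1)) := by
          rw [hp, pow_succ' _ (m + 3), pow_succ' _ m]
          simp only [smul_mul_assoc, mul_smul_comm, smul_smul, mul_assoc]
      _ = _ := by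
          simp only [inv_pow]
          congr 1
          field_simp
          ring

end StraighteningRelations

end Sequences

section BarInvariance

variable {K R : Type*} [Field K] [Ring R] [Algebra K R]

/-- A semilinear anti-automorphism `σ` over the involution `bar` inverting `t = q²`, which rescales
the root vector `uᵢ` by `tⁱ`. -/
structure IsTwistedBar (t : K) (x : Fin 4 → R) {bar : K →+* K} (σ : R →ₛₗ[bar] R) : Prop where
  bar_eq_inv : bar t = t⁻¹
  map_mul (y y' : R) : σ (y * y') = σ y' * σ y
  map_root (i : Fin 4) : σ (x i) = t ^ (i : ℕ) • x i

namespace IsTwistedBar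

variable {t : K} {x : Fin 4 → R} {bar : K →+* K} {σ : R →ₛₗ[bar] R}

theorem map_p₁ (h : StraighteningRelations t x) (hσ : IsTwistedBar t x σ) :
    σ (p₁ t x) = t ^ 3 • p₁ t x := by
  have R₃₁ := h.three_one
  rw [pow_two] at R₃₁
  simp only [p₁, pow_two, map_sub, map_smulₛₗ, hσ.map_mul, hσ.map_root, hσ.bar_eq_inv,
    smul_mul_smul_comm, smul_smul, Fin.isValue, Fin.coe_ofNat_eq_mod, Nat.reduceMod]
  linear_combination (norm := skip) -t ^ 3 • R₃₁
  match_scalars <;> field_simp <;> ring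

theorem map_p₀ (h : StraighteningRelations t x) (hσ : IsTwistedBar t x σ) :
    σ (p₀ t x) = t • p₀ t x := by
  have R₂₀ := h.two_zero
  rw [pow_two] at R₂₀
  simp only [p₀, pow_two, map_sub, map_smulₛₗ, hσ.map_mul, hσ.map_root, hσ.bar_eq_inv,
    smul_mul_smul_comm, smul_smul, Fin.isValue, Fin.coe_ofNat_eq_mod, Nat.reduceMod]
  linear_combination (norm := skip) -t • R₂₀
  match_scalars <;> field_simp <;> ring

theorem map_z (h : StraighteningRelations t x) (hσ : IsTwistedBar t x σ) :
    σ (z t x) = t ^ 2 • z t x := by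
  have R₂₁ := h.two_one.eq
  simp only [z, map_sub, map_smulₛₗ, hσ.map_mul, hσ.map_root, hσ.bar_eq_inv,
    smul_mul_smul_comm, smul_smul, Fin.isValue, Fin.coe_ofNat_eq_mod, Nat.reduceMod]
  linear_combination (norm := skip) -t ^ 2 • h.three_zero + t ^ 3 • R₂₁
  match_scalars <;> field_simp <;> ring

theorem map_d (ht : t ≠ 0) (h : StraighteningRelations t x) (hσ : IsTwistedBar t x σ) :
    σ (d t x) = t ^ 4 • d t x := by
  rw [d, map_smulₛₗ, hσ.map_mul, hσ.map_p₁ h, hσ.map_p₀ h, map_inv₀, hσ.bar_eq_inv, inv_inv,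
    smul_mul_smul_comm, ← d, h.d_eq ht, smul_smul, smul_smul]
  ring_nf

theorem map_xSeq (ht : t ≠ 0) (h : StraighteningRelations t x) (hσ : IsTwistedBar t x σ) :
    ∀ n, σ (xSeq t x n) = t ^ (n + 3) • xSeq t x n
  | 0 => hσ.map_root 3
  | 1 => by
    have hp₁x₂ := (h.qCommute_p₁_x₂ ht).eq
    nth_rw 2 [h.xSeq_one ht]
    simp only [xSeq, map_sub, map_smulₛₗ, hσ.map_mul, hσ.map_root, hσ.bar_eq_inv, hσ.map_p₁ h,
      hσ.map_z h, hp₁x₂, smul_mul_smul_comm, smul_smul, Fin.isValue, Fin.coe_ofNat_eq_mod,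
      Nat.reduceMod]
    match_scalars <;> field_simp
  | n + 2 => by
    rw [xSeq, map_sub, hσ.map_mul, hσ.map_mul, hσ.map_z h, hσ.map_d ht h,
      hσ.map_xSeq ht h (n + 1), hσ.map_xSeq ht h n, smul_mul_smul_comm, smul_mul_smul_comm,
      ← xSeq, h.xSeq_add_two ht]
    module

end IsTwistedBar

end BarInvariance

/-! ### Uniqueness of unitriangular bar-eigenvectors -/

section Lattice

open Polynomial in
/-- The subring `ℤ[q]` of `ℚ(q)`. -/
def qPolynomials : Subring F := (eval₂RingHom (Int.castRingHom F) qq).range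

theorem qq_mem_qPolynomials : qq ∈ qPolynomials := ⟨Polynomial.X, by simp⟩

theorem qq_ne_zero : qq ≠ 0 := RatFunc.X_ne_zero

open Polynomial in
theorem eval₂_qq_injective : Function.Injective (eval₂ (Int.castRingHom F) qq) := by
  have hcomp : eval₂RingHom (Int.castRingHom F) qq =
      (algebraMap ℚ[X] F).comp (mapRingHom (Int.castRingHom ℚ)) :=
    Polynomial.ringHom_ext (by simp) (by simp [qq])
  have hinj : Function.Injective (eval₂RingHom (Int.castRingHom F) qq) :=
    hcomp ▸ (IsFractionRing.injective ℚ[X] F).comp (map_injective _ Int.cast_injective)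
  exact hinj

open Polynomial in
theorem eval₂_qq_reverse (p : ℤ[X]) :
    eval₂ (Int.castRingHom F) qq p.reverse =
      eval₂ (Int.castRingHom F) qq⁻¹ p * qq ^ p.natDegree := by
  let _ : Invertible qq⁻¹ := invertibleOfNonzero (inv_ne_zero qq_ne_zero)
  have hmul := eval₂_reverse_mul_pow (Int.castRingHom F) qq⁻¹ p
  rw [invOf_eq_inv, inv_inv] at hmul
  rw [← hmul, mul_assoc, ← mul_pow, inv_mul_cancel₀ qq_ne_zero, one_pow, mul_one]

-- Reversing `p` turns `p(q⁻¹) = q² p(q)` into an identity of polynomials whose two sides have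
-- degrees at most `deg p` and exactly `2 deg p + 2`.
open Polynomial in
theorem eq_zero_of_bar_qq_mul_eq {bar : F →+* F} (hbar : bar qq = qq⁻¹) {c : F}
    (hc : c ∈ qPolynomials) (h : bar (qq * c) = qq * c) : c = 0 := by
  obtain ⟨p, rfl⟩ := hc
  rw [coe_eval₂RingHom] at h ⊢
  have hbar_eval : bar (eval₂ (Int.castRingHom F) qq p) = eval₂ (Int.castRingHom F) qq⁻¹ p := by
    rw [hom_eval₂, hbar, RingHom.ext_int (bar.comp _) (Int.castRingHom F)]
  have hinv : eval₂ (Int.castRingHom F) qq⁻¹ p =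
      qq * (qq * eval₂ (Int.castRingHom F) qq p) := by
    rw [← h, map_mul, hbar, hbar_eval, mul_inv_cancel_left₀ qq_ne_zero]
  have hreverse : p.reverse = p * X ^ (p.natDegree + 2) := by
    apply eval₂_qq_injective
    rw [eval₂_qq_reverse, hinv, eval₂_mul, eval₂_X_pow]
    ring
  by_contra hne
  have hp : p ≠ 0 := by
    rintro rfl
    exact hne (eval₂_zero _ _)
  have hdegree := p.reverse_natDegree_le
  rw [hreverse, natDegree_mul_X_pow _ hp] at hdegree
  omega

variable {ι M : Type*} [AddCommGroup M] [Module F M]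

/-- The `ℤ[q]`-lattice spanned by the vectors `E b` with `b ∈ s`. -/
def intSpan (E : ι → M) (s : Set ι) : Submodule qPolynomials M :=
  Submodule.span qPolynomials (E '' s)

/-- `Y` is unitriangular at `a`: it lies in `E a + Σ_{b > a} qℤ[q] E b`, where `b > a` means
`r a b`. -/
def HasLeadingTerm (r : ι → ι → Prop) (E : ι → M) (a : ι) (Y : M) : Prop :=
  ∃ X ∈ intSpan E {b | r a b}, Y = E a + qq • X

variable {E : ι → M} {s s' : Set ι} {r : ι → ι → Prop} {a a' : ι} {X Y : M}

theorem mem_intSpan {b : ι} (hb : b ∈ s) : E b ∈ intSpan E s :=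
  Submodule.subset_span (Set.mem_image_of_mem E hb)

theorem intSpan_mono (h : s ⊆ s') : intSpan E s ≤ intSpan E s' :=
  Submodule.span_mono (Set.image_mono h)

theorem qq_pow_smul_mem_intSpan (n : ℕ) (hX : X ∈ intSpan E s) : qq ^ n • X ∈ intSpan E s :=
  (intSpan E s).smul_mem (⟨qq ^ n, pow_mem qq_mem_qPolynomials n⟩ : qPolynomials) hX

theorem map_mem_intSpan (T : M →ₗ[F] M) (hT : ∀ b ∈ s, T (E b) ∈ intSpan E s')
    (hX : X ∈ intSpan E s) : T X ∈ intSpan E s' := by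
  have hle : intSpan E s ≤ (intSpan E s').comap (T.restrictScalars qPolynomials) :=
    Submodule.span_le.2 (Set.image_subset_iff.2 hT)
  exact hle hX

theorem HasLeadingTerm.self (r : ι → ι → Prop) (E : ι → M) (a : ι) :
    HasLeadingTerm r E a (E a) :=
  ⟨0, zero_mem _, by simp⟩

theorem HasLeadingTerm.add (hY : HasLeadingTerm r E a Y) (hX : X ∈ intSpan E {b | r a b}) :
    HasLeadingTerm r E a (Y + qq • X) := by
  obtain ⟨X', hX', rfl⟩ := hY
  exact ⟨X' + X, add_mem hX' hX, by rw [smul_add, add_assoc]⟩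

theorem HasLeadingTerm.mem_intSpan (hY : HasLeadingTerm r E a Y) :
    Y ∈ intSpan E (insert a {b | r a b}) := by
  obtain ⟨X, hX, rfl⟩ := hY
  have hqX := qq_pow_smul_mem_intSpan 1 (intSpan_mono (Set.subset_insert a _) hX)
  rw [pow_one] at hqX
  exact add_mem (QuantumKronecker.mem_intSpan (Set.mem_insert a _)) hqX

theorem HasLeadingTerm.map (T : M →ₗ[F] M) (ha : T (E a) = E a')
    (hT : ∀ b, r a b → T (E b) ∈ intSpan E {b | r a' b}) (hY : HasLeadingTerm r E a Y) :
    HasLeadingTerm r E a' (T Y) := by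
  obtain ⟨X, hX, rfl⟩ := hY
  exact ⟨T X, map_mem_intSpan T hT hX, by rw [map_add, map_smul, ha]⟩

theorem mem_span_of_mem_intSpan (hX : X ∈ intSpan E s) : X ∈ Submodule.span F (E '' s) :=
  Submodule.span_le_restrictScalars qPolynomials F _ hX

end Lattice

section Uniqueness

variable {ι M : Type*} [AddCommGroup M] [Module F M] {E : ι → M} {r : ι → ι → Prop}
  {bar : F →+* F} {σ : M →ₛₗ[bar] M} {B : ι → M} {χ : ι → F}

theorem map_sub_smul_mem_span [IsTrans ι r] (hwf : WellFounded (Function.swap r))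
    (hB : ∀ a, HasLeadingTerm r E a (B a)) (hσB : ∀ a, σ (B a) = χ a • B a) (a : ι) :
    σ (E a) - χ a • E a ∈ Submodule.span F (E '' {b | r a b}) := by
  induction a using hwf.induction with
  | _ a ih =>
  have hσE : ∀ b, r a b → σ (E b) ∈ Submodule.span F (E '' {b | r a b}) := fun b hb ↦ by
    have hsub : {c | r b c} ⊆ {c | r a c} := fun c hc ↦ _root_.trans hb hc
    have hEb : E b ∈ Submodule.span F (E '' {b | r a b}) := Submodule.subset_span ⟨b, hb, rfl⟩
    simpa using add_mem (Submodule.span_mono (Set.image_mono hsub) (ih b hb))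
      (Submodule.smul_mem _ (χ b) hEb)
  obtain ⟨X, hX, hBX⟩ := hB a
  have hXspan := mem_span_of_mem_intSpan hX
  have hσX : σ X ∈ Submodule.span F (E '' {b | r a b}) := by
    have hle : Submodule.span F (E '' {b | r a b}) ≤
        (Submodule.span F (E '' {b | r a b})).comap σ :=
      Submodule.span_le.2 (Set.image_subset_iff.2 hσE)
    exact hle hXspan
  have heq : σ (E a) - χ a • E a = χ a • qq • X - bar qq • σ X := by
    have h := hσB a
    rw [hBX, map_add, map_smulₛₗ, smul_add] at h
    exact sub_eq_sub_iff_add_eq_add.2 (h.trans (add_comm _ _))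
  rw [heq]
  exact sub_mem (Submodule.smul_mem _ _ (Submodule.smul_mem _ _ hXspan))
    (Submodule.smul_mem _ _ hσX)

theorem exists_minimal_term [IsStrictOrder ι r] {s : Set ι} {X : M} (hX : X ∈ intSpan E s)
    (hX0 : X ≠ 0) : ∃ b ∈ s, ∃ c ∈ qPolynomials, c ≠ 0 ∧
      ∃ Z ∈ Submodule.span F (E '' {d | d ≠ b ∧ ¬ r d b}), X = c • E b + Z := by
  classical
  obtain ⟨l, hl, rfl⟩ := (Finsupp.mem_span_image_iff_linearCombination qPolynomials).1 hX
  have hl0 : l.support.Nonempty := Finsupp.support_nonempty_iff.2 fun h ↦ hX0 (by rw [h, map_zero])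
  obtain ⟨⟨b, hb⟩, -, hmin⟩ := (l.support.finite_toSet.wellFoundedOn (r := r)).has_min Set.univ
    ⟨⟨_, hl0.choose_spec⟩, trivial⟩
  refine ⟨b, hl hb, l b, (l b).2, fun h ↦ Finsupp.mem_support_iff.1 hb (Subtype.ext h),
    Finsupp.linearCombination qPolynomials E (l.erase b), ?_, ?_⟩
  · refine mem_span_of_mem_intSpan ((Finsupp.mem_span_image_iff_linearCombination qPolynomials).2
      ⟨l.erase b, fun d hd ↦ ?_, rfl⟩)
    rw [Finsupp.support_erase, Finset.mem_coe, Finset.mem_erase] at hd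
    exact ⟨hd.1, hmin ⟨d, hd.2⟩ trivial⟩
  · conv_lhs => rw [← Finsupp.single_add_erase b l]
    simp [Subring.smul_def]

theorem map_mem_span_compl
    (hσE : ∀ a, σ (E a) - χ a • E a ∈ Submodule.span F (E '' {b | r a b})) {b : ι} {Z : M}
    (hZ : Z ∈ Submodule.span F (E '' {d | d ≠ b ∧ ¬ r d b})) :
    σ Z ∈ Submodule.span F (E '' {b}ᶜ) := by
  have hle : Submodule.span F (E '' {d | d ≠ b ∧ ¬ r d b}) ≤
      (Submodule.span F (E '' {b}ᶜ)).comap σ := by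
    refine Submodule.span_le.2 (Set.image_subset_iff.2 fun d ⟨hdb, hrdb⟩ ↦ ?_)
    have hsub : {e | r d e} ⊆ {b}ᶜ := fun e hde heb ↦ hrdb (heb ▸ hde)
    have hEd : E d ∈ Submodule.span F (E '' {b}ᶜ) := Submodule.subset_span ⟨d, hdb, rfl⟩
    simpa using add_mem (Submodule.span_mono (Set.image_mono hsub) (hσE d))
      (Submodule.smul_mem _ (χ d) hEd)
  exact hle hZ

-- Compare the coefficients of a minimal basis vector `E b` occurring in `X`.
theorem eq_zero_of_map_qq_smul_eq [IsStrictOrder ι r] (hE : LinearIndependent F E)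
    (hbar : bar qq = qq⁻¹)
    (hσE : ∀ a, σ (E a) - χ a • E a ∈ Submodule.span F (E '' {b | r a b}))
    {a : ι} (hχa : χ a ≠ 0) (hχ : ∀ b, r a b → χ b = χ a)
    {X : M} (hX : X ∈ intSpan E {b | r a b}) (hσX : σ (qq • X) = χ a • qq • X) : X = 0 := by
  by_contra hX0
  obtain ⟨b, hab, c, hc, hc0, Z, hZ, rfl⟩ := exists_minimal_term (r := r) hX hX0
  have hσZ := map_mem_span_compl hσE hZ
  have hZ' : Z ∈ Submodule.span F (E '' {b}ᶜ) :=
    Submodule.span_mono (Set.image_mono fun _ hd ↦ hd.1) hZ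
  have hEb : σ (E b) - χ a • E b ∈ Submodule.span F (E '' {b}ᶜ) := by
    have hsub : {d | r b d} ⊆ {b}ᶜ := by
      rintro _ hbb rfl
      exact irrefl _ hbb
    rw [← hχ b hab]
    exact Submodule.span_mono (Set.image_mono hsub) (hσE b)
  have hcoeff : (χ a * (qq * c - bar (qq * c))) • E b =
      bar (qq * c) • (σ (E b) - χ a • E b) + bar qq • σ Z - (χ a * qq) • Z := by
    rw [map_smulₛₗ, map_add, map_smulₛₗ] at hσX
    rw [map_mul]
    have hX : (χ a * (qq * c)) • E b = bar qq • (bar c • σ (E b) + σ Z) - (χ a * qq) • Z := by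
      rw [hσX, eq_sub_iff_add_eq]
      simp only [smul_add, smul_smul]
    rw [mul_sub, sub_smul, hX, smul_sub, smul_add, smul_smul, smul_smul,
      mul_comm (χ a) (bar qq * bar c)]
    abel
  have hmem : (χ a * (qq * c - bar (qq * c))) • E b ∈ Submodule.span F (E '' {b}ᶜ) := by
    rw [hcoeff]
    exact sub_mem (add_mem (Submodule.smul_mem _ _ hEb) (Submodule.smul_mem _ _ hσZ))
      (Submodule.smul_mem _ _ hZ')
  rw [Set.compl_eq_univ_sdiff] at hmem
  have hbar_eq := (mul_eq_zero.1 (hE.eq_zero_of_smul_mem_span b _ hmem)).resolve_left hχa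
  exact hc0 (eq_zero_of_bar_qq_mul_eq hbar hc (sub_eq_zero.1 hbar_eq).symm)

theorem HasLeadingTerm.unique [IsStrictOrder ι r] (hwf : WellFounded (Function.swap r))
    (hE : LinearIndependent F E) (hbar : bar qq = qq⁻¹)
    (hB : ∀ a, HasLeadingTerm r E a (B a)) (hσB : ∀ a, σ (B a) = χ a • B a)
    {a : ι} (hχa : χ a ≠ 0) (hχ : ∀ b, r a b → χ b = χ a)
    {Y : M} (hY : HasLeadingTerm r E a Y) (hσY : σ Y = χ a • Y) : Y = B a := by
  obtain ⟨X, hX, hYX⟩ := hY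
  obtain ⟨X', hX', hBX'⟩ := hB a
  have hdiff : Y - B a = qq • (X - X') := by rw [hYX, hBX', smul_sub]; abel
  have hzero : X - X' = 0 :=
    eq_zero_of_map_qq_smul_eq hE hbar (map_sub_smul_mem_span hwf hB hσB) hχa hχ
      (sub_mem hX hX') (by rw [← hdiff, map_sub, hσY, hσB, smul_sub])
  rw [← sub_eq_zero, hdiff, hzero, smul_zero]

end Uniqueness

/-! ### Multiplication of PBW monomials -/

section Monomials

variable {K R : Type*} [Field K] [Ring R] [Algebra K R] {t : K} {x : Fin 4 → R}

namespace StraighteningRelations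

theorem p₁_mul_monomial (ht : t ≠ 0) (h : StraighteningRelations t x) (a b c e : ℕ) :
    p₁ t x * (x 3 ^ a * x 2 ^ b * x 1 ^ c * x 0 ^ e) =
      t⁻¹ ^ a • (t⁻¹ ^ b • (x 3 ^ (a + 1) * x 2 ^ b * x 1 ^ (c + 1) * x 0 ^ e)
        - t • (x 3 ^ a * x 2 ^ (b + 2) * x 1 ^ c * x 0 ^ e)) := by
  have hp₁x₃ := (h.qCommute_p₁_x₃ ht).pow_right a
  have hp₁x₂ := (h.qCommute_p₁_x₂ ht).commute.pow_right b
  have hx₂x₃ := (h.three_two.symm ht).pow_left b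
  calc p₁ t x * (x 3 ^ a * x 2 ^ b * x 1 ^ c * x 0 ^ e)
      = p₁ t x * x 3 ^ a * x 2 ^ b * x 1 ^ c * x 0 ^ e := by simp only [mul_assoc]
    _ = t⁻¹ ^ a • (x 3 ^ a * (p₁ t x * x 2 ^ b) * x 1 ^ c * x 0 ^ e) := by
      rw [hp₁x₃.eq]
      simp only [mul_assoc, smul_mul_assoc]
    _ = t⁻¹ ^ a • (x 3 ^ a * (x 2 ^ b * x 3) * x 1 ^ (c + 1) * x 0 ^ e
          - t • (x 3 ^ a * x 2 ^ (b + 2) * x 1 ^ c * x 0 ^ e)) := by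
      rw [hp₁x₂.eq, p₁, pow_succ' (x 1) c, pow_add (x 2) b 2]
      simp only [mul_sub, sub_mul, mul_assoc, smul_mul_assoc, mul_smul_comm]
    _ = _ := by
      rw [hx₂x₃.eq, pow_succ (x 3) a]
      simp only [mul_assoc, smul_mul_assoc, mul_smul_comm]

theorem monomial_mul_p₀ (ht : t ≠ 0) (h : StraighteningRelations t x) (a b c e : ℕ) :
    x 3 ^ a * x 2 ^ b * x 1 ^ c * x 0 ^ e * p₀ t x =
      t⁻¹ ^ e • (t⁻¹ ^ c • (x 3 ^ a * x 2 ^ (b + 1) * x 1 ^ c * x 0 ^ (e + 1))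
        - t • (x 3 ^ a * x 2 ^ b * x 1 ^ (c + 2) * x 0 ^ e)) := by
  have hx₀p₀ := (h.qCommute_x₀_p₀ ht).pow_left e
  have hx₁p₀ := (h.qCommute_x₁_p₀ ht).commute.pow_left c
  have hx₀x₁ := (h.one_zero.symm ht).pow_right c
  calc x 3 ^ a * x 2 ^ b * x 1 ^ c * x 0 ^ e * p₀ t x
      = x 3 ^ a * x 2 ^ b * x 1 ^ c * (x 0 ^ e * p₀ t x) := by simp only [mul_assoc]
    _ = t⁻¹ ^ e • (x 3 ^ a * x 2 ^ b * (x 1 ^ c * p₀ t x) * x 0 ^ e) := by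
      rw [hx₀p₀.eq]
      simp only [mul_assoc, mul_smul_comm]
    _ = t⁻¹ ^ e • (x 3 ^ a * x 2 ^ (b + 1) * (x 0 * x 1 ^ c) * x 0 ^ e
          - t • (x 3 ^ a * x 2 ^ b * x 1 ^ (c + 2) * x 0 ^ e)) := by
      rw [hx₁p₀.eq, p₀, pow_succ (x 2) b, add_comm c 2, pow_add (x 1) 2 c]
      simp only [mul_sub, sub_mul, mul_assoc, smul_mul_assoc, mul_smul_comm]
    _ = _ := by
      rw [hx₀x₁.eq, pow_succ' (x 0) e]
      simp only [mul_assoc, smul_mul_assoc, mul_smul_comm]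

end StraighteningRelations

end Monomials

section PBW

/-- The strict order on `ℕ⁴` underlying `Sset`. -/
abbrev TriLT (a b : Idx) : Prop := b ∈ Sset a

variable {a b c : Idx}

theorem tri_refl (a : Idx) : tri a a := ⟨0, 0, by simp⟩

theorem tri_trans (hab : tri a b) (hbc : tri b c) : tri a c := by
  obtain ⟨s, r, hab⟩ := hab
  obtain ⟨s', r', hbc⟩ := hbc
  exact ⟨s + s', r + r', by push_cast; omega⟩

theorem TriLT.add_lt_add (h : TriLT a b) : b.1 + b.2.2.2 < a.1 + a.2.2.2 := by
  obtain ⟨⟨s, r, hab⟩, hne⟩ := h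
  by_contra! hle
  exact hne (by ext <;> omega)

theorem triLT_of_tri_of_lt (h : tri a b) (hlt : b.1 + b.2.2.2 < a.1 + a.2.2.2) : TriLT a b :=
  ⟨h, by rintro rfl; exact hlt.false⟩

instance : IsStrictOrder Idx TriLT where
  irrefl _ h := h.2 rfl
  trans _ _ _ hab hbc :=
    triLT_of_tri_of_lt (tri_trans hab.1 hbc.1) (hbc.add_lt_add.trans hab.add_lt_add)

theorem wellFounded_swap_triLT : WellFounded (Function.swap TriLT) :=
  Subrelation.wf TriLT.add_lt_add (measure fun a : Idx ↦ a.1 + a.2.2.2).wf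

theorem Nnum_eq_of_tri (h : tri a b) : Nnum a = Nnum b := by
  obtain ⟨s, r, h₃, h₂, h₁, h₀⟩ := h
  rw [Nnum, Nnum, h₃, h₂, h₁, h₀]
  ring

variable {R : Type*} [Ring R] [Algebra F R]

/-- The PBW monomials in `x`, normalized as the dual PBW basis `Ee`. -/
def pbw (x : Fin 4 → R) (a : Idx) : R :=
  qq ^ bexp a • (x 3 ^ a.1 * x 2 ^ a.2.1 * x 1 ^ a.2.2.1 * x 0 ^ a.2.2.2)

theorem choose_succ_two (n : ℕ) : (n + 1).choose 2 = n.choose 2 + n := by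
  rw [Nat.choose_succ_succ' n 1, Nat.choose_one_right, add_comm]

variable {x : Fin 4 → R}

theorem pbw_succ_three (a b c e : ℕ) :
    pbw x (a + 1, b, c, e) = qq ^ a • (x 3 * pbw x (a, b, c, e)) := by
  simp only [pbw, bexp, choose_succ_two, mul_smul_comm, smul_smul, pow_succ', mul_assoc, ← pow_add]
  congr 2
  ring

theorem pbw_succ_zero (a b c e : ℕ) :
    pbw x (a, b, c, e + 1) = qq ^ e • (pbw x (a, b, c, e) * x 0) := by
  simp only [pbw, bexp, choose_succ_two, smul_mul_assoc, smul_smul, pow_succ, mul_assoc, ← pow_add]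
  congr 2
  ring

namespace StraighteningRelations

theorem pbw_succ_two (h : StraighteningRelations (qq ^ 2) x) (a b c e : ℕ) :
    pbw x (a, b + 1, c, e) = qq ^ (2 * a + b) • (x 2 * pbw x (a, b, c, e)) := by
  have hq := qq_ne_zero
  have hx₂x₃ := (h.three_two.symm (pow_ne_zero 2 hq)).pow_right a
  simp only [pbw, bexp, choose_succ_two, mul_smul_comm, smul_smul]
  rw [← mul_assoc, ← mul_assoc, ← mul_assoc, hx₂x₃.eq]
  simp only [smul_mul_assoc, smul_smul, pow_succ', inv_pow, mul_assoc]
  congr 1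
  field_simp
  ring

theorem pbw_succ_one (h : StraighteningRelations (qq ^ 2) x) (a b c e : ℕ) :
    pbw x (a, b, c + 1, e) = qq ^ (2 * e + c) • (pbw x (a, b, c, e) * x 1) := by
  have hq := qq_ne_zero
  have hx₀x₁ := (h.one_zero.symm (pow_ne_zero 2 hq)).pow_left e
  simp only [pbw, bexp, choose_succ_two, smul_mul_assoc, smul_smul]
  rw [mul_assoc _ _ (x 1), hx₀x₁.eq]
  simp only [mul_smul_comm, smul_smul, pow_succ, inv_pow, mul_assoc]
  congr 1
  field_simp
  ring

theorem p₁_mul_pbw (h : StraighteningRelations (qq ^ 2) x) (a b c e : ℕ) :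
    qq ^ (3 * a + 2 * b + c) • (p₁ (qq ^ 2) x * pbw x (a, b, c, e)) =
      pbw x (a + 1, b, c + 1, e) - qq ^ (1 + a + c) • pbw x (a, b + 2, c, e) := by
  have hq := qq_ne_zero
  simp only [pbw, bexp, choose_succ_two, mul_smul_comm, h.p₁_mul_monomial (pow_ne_zero 2 hq),
    smul_sub, smul_smul, inv_pow]
  congr 2 <;> field_simp <;> ring

theorem pbw_mul_p₀ (h : StraighteningRelations (qq ^ 2) x) (a b c e : ℕ) :
    qq ^ (b + 2 * c + 3 * e) • (pbw x (a, b, c, e) * p₀ (qq ^ 2) x) =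
      pbw x (a, b + 1, c, e + 1) - qq ^ (1 + b + e) • pbw x (a, b, c + 2, e) := by
  have hq := qq_ne_zero
  simp only [pbw, bexp, choose_succ_two, smul_mul_assoc, h.monomial_mul_p₀ (pow_ne_zero 2 hq),
    smul_sub, smul_smul, inv_pow]
  congr 2 <;> field_simp <;> ring

end StraighteningRelations

end PBW

section LatticeMaps

variable {R : Type*} [Ring R] [Algebra F R] {x : Fin 4 → R} {a b c e : ℕ} {X : R}

theorem hasLeadingTerm_x₃_mul (hX : HasLeadingTerm TriLT (pbw x) (a, b, c, e) X) :
    HasLeadingTerm TriLT (pbw x) (a + 1, b, c, e) (qq ^ a • (x 3 * X)) := by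
  refine hX.map (qq ^ a • LinearMap.mulLeft F (x 3)) (pbw_succ_three a b c e).symm ?_
  rintro ⟨a', b', c', e'⟩ hlt
  have hadd := hlt.add_lt_add
  obtain ⟨⟨s, r, htri⟩, -⟩ := hlt
  dsimp only at htri hadd
  obtain rfl : a = s + a' := by omega
  rw [LinearMap.smul_apply, LinearMap.mulLeft_apply, pow_add, ← smul_smul, ← pbw_succ_three]
  refine qq_pow_smul_mem_intSpan s (mem_intSpan (triLT_of_tri_of_lt ⟨s, r, ?_⟩ ?_)) <;>
    dsimp only <;> omega

theorem hasLeadingTerm_mul_x₀ (hX : HasLeadingTerm TriLT (pbw x) (a, b, c, e) X) :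
    HasLeadingTerm TriLT (pbw x) (a, b, c, e + 1) (qq ^ e • (X * x 0)) := by
  refine hX.map (qq ^ e • LinearMap.mulRight F (x 0)) (pbw_succ_zero a b c e).symm ?_
  rintro ⟨a', b', c', e'⟩ hlt
  have hadd := hlt.add_lt_add
  obtain ⟨⟨s, r, htri⟩, -⟩ := hlt
  dsimp only at htri hadd
  obtain rfl : e = r + e' := by omega
  rw [LinearMap.smul_apply, LinearMap.mulRight_apply, pow_add, ← smul_smul, ← pbw_succ_zero]
  refine qq_pow_smul_mem_intSpan r (mem_intSpan (triLT_of_tri_of_lt ⟨s, r, ?_⟩ ?_)) <;>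
    dsimp only <;> omega

namespace StraighteningRelations

theorem x₂_mul_mem_intSpan (h : StraighteningRelations (qq ^ 2) x)
    (hX : X ∈ intSpan (pbw x) {i | tri (a, b, c, e) i}) :
    qq ^ (2 * a + b) • (x 2 * X) ∈ intSpan (pbw x) {i | tri (a, b + 1, c, e) i} := by
  refine map_mem_intSpan (qq ^ (2 * a + b) • LinearMap.mulLeft F (x 2)) ?_ hX
  rintro ⟨a', b', c', e'⟩ ⟨s, r, htri⟩
  dsimp only at htri
  have hexp : 2 * a + b = r + (2 * a' + b') := by omega
  rw [LinearMap.smul_apply, LinearMap.mulLeft_apply, hexp, pow_add, ← smul_smul, ← h.pbw_succ_two]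
  exact qq_pow_smul_mem_intSpan r (mem_intSpan ⟨s, r, by dsimp only; omega⟩)

theorem mul_x₁_mem_intSpan (h : StraighteningRelations (qq ^ 2) x)
    (hX : X ∈ intSpan (pbw x) {i | tri (a, b, c, e) i}) :
    qq ^ (2 * e + c) • (X * x 1) ∈ intSpan (pbw x) {i | tri (a, b, c + 1, e) i} := by
  refine map_mem_intSpan (qq ^ (2 * e + c) • LinearMap.mulRight F (x 1)) ?_ hX
  rintro ⟨a', b', c', e'⟩ ⟨s, r, htri⟩
  dsimp only at htri
  have hexp : 2 * e + c = s + (2 * e' + c') := by omega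
  rw [LinearMap.smul_apply, LinearMap.mulRight_apply, hexp, pow_add, ← smul_smul,
    ← h.pbw_succ_one]
  exact qq_pow_smul_mem_intSpan s (mem_intSpan ⟨s, r, by dsimp only; omega⟩)

theorem p₁_mul_mem_intSpan (h : StraighteningRelations (qq ^ 2) x)
    (hX : X ∈ intSpan (pbw x) {i | tri (a, b, c, e) i}) :
    qq ^ (3 * a + 2 * b + c) • (p₁ (qq ^ 2) x * X) ∈
      intSpan (pbw x) {i | tri (a + 1, b, c + 1, e) i} := by
  refine map_mem_intSpan (qq ^ (3 * a + 2 * b + c) • LinearMap.mulLeft F (p₁ (qq ^ 2) x)) ?_ hX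
  rintro ⟨a', b', c', e'⟩ ⟨s, r, htri⟩
  dsimp only at htri
  have hexp : 3 * a + 2 * b + c = 3 * a' + 2 * b' + c' := by omega
  rw [LinearMap.smul_apply, LinearMap.mulLeft_apply, hexp, h.p₁_mul_pbw]
  exact sub_mem (mem_intSpan ⟨s, r, by dsimp only; omega⟩)
    (qq_pow_smul_mem_intSpan _ (mem_intSpan ⟨s + 1, r, by dsimp only; omega⟩))

theorem mul_p₀_mem_intSpan (h : StraighteningRelations (qq ^ 2) x)
    (hX : X ∈ intSpan (pbw x) {i | tri (a, b, c, e) i}) :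
    qq ^ (b + 2 * c + 3 * e) • (X * p₀ (qq ^ 2) x) ∈
      intSpan (pbw x) {i | tri (a, b + 1, c, e + 1) i} := by
  refine map_mem_intSpan (qq ^ (b + 2 * c + 3 * e) • LinearMap.mulRight F (p₀ (qq ^ 2) x)) ?_ hX
  rintro ⟨a', b', c', e'⟩ ⟨s, r, htri⟩
  dsimp only at htri
  have hexp : b + 2 * c + 3 * e = b' + 2 * c' + 3 * e' := by omega
  rw [LinearMap.smul_apply, LinearMap.mulRight_apply, hexp, h.pbw_mul_p₀]
  exact sub_mem (mem_intSpan ⟨s, r, by dsimp only; omega⟩)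
    (qq_pow_smul_mem_intSpan _ (mem_intSpan ⟨s, r + 1, by dsimp only; omega⟩))

end StraighteningRelations

end LatticeMaps

/-! ### Canonical elements -/

section CanonicalElements

variable {R : Type*} [Ring R] [Algebra F R]

/-- The multiple of `zSeq` by a power of `q` that is the dual canonical element `B[n,0,0,n]`. -/
def zCanonical (x : Fin 4 → R) (n : ℕ) : R :=
  qq ^ (2 * (n : ℤ) * (n - 1)) • zSeq (qq ^ 2) x n

/-- The multiple of `xSeq` by a power of `q` that is the dual canonical element `B[n+1,0,0,n]`. -/
def xCanonical (x : Fin 4 → R) (n : ℕ) : R :=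
  qq ^ (2 * (n : ℤ) ^ 2 - n) • xSeq (qq ^ 2) x n

variable {x : Fin 4 → R}

theorem triLT_of_tri_one_one {a e : ℕ} {i : Idx} (hi : tri (a, 1, 1, e) i) :
    TriLT (a + 1, 0, 0, e + 1) i := by
  obtain ⟨s, r, hi⟩ := hi
  dsimp only at hi
  exact triLT_of_tri_of_lt ⟨s + 1, r + 1, by dsimp only; push_cast; omega⟩ (by dsimp only; omega)

theorem HasLeadingTerm.add_of_mem_one_one {a e : ℕ} {X Y : R}
    (hY : HasLeadingTerm TriLT (pbw x) (a + 1, 0, 0, e + 1) Y)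
    (hX : X ∈ intSpan (pbw x) {i | tri (a, 1, 1, e) i}) :
    HasLeadingTerm TriLT (pbw x) (a + 1, 0, 0, e + 1) (Y + qq • X) :=
  hY.add (intSpan_mono (fun _ ↦ triLT_of_tri_one_one) hX)

theorem HasLeadingTerm.mem_intSpan_tri {a : Idx} {Y : R} (hY : HasLeadingTerm TriLT (pbw x) a Y) :
    Y ∈ intSpan (pbw x) {i | tri a i} := by
  have hsub : insert a {b | TriLT a b} ⊆ {b | tri a b} := by
    rintro b (rfl | hb)
    exacts [tri_refl _, hb.1]
  exact intSpan_mono hsub hY.mem_intSpan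

theorem hasLeadingTerm_zCanonical_one :
    HasLeadingTerm TriLT (pbw x) (1, 0, 0, 1) (zCanonical x 1) := by
  have hexpand : zCanonical x 1 = pbw x (1, 0, 0, 1) + qq • -(qq ^ 1 • pbw x (0, 1, 1, 0)) := by
    simp [zCanonical, pbw, bexp, zSeq, z, sub_eq_add_neg, smul_smul, pow_two]
  rw [hexpand]
  exact (HasLeadingTerm.self _ _ _).add_of_mem_one_one
    (neg_mem (qq_pow_smul_mem_intSpan 1 (mem_intSpan (tri_refl _))))

namespace StraighteningRelations

theorem xCanonical_succ (h : StraighteningRelations (qq ^ 2) x) (n : ℕ) :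
    xCanonical x (n + 1) = qq ^ (n + 1) • (x 3 * zCanonical x (n + 1))
      + qq • -(qq ^ (2 * (n + 1)) •
        (x 2 * (qq ^ (3 * n) • (p₁ (qq ^ 2) x * zCanonical x n)))) := by
  have hq := qq_ne_zero
  rw [xCanonical, h.xSeq_succ (pow_ne_zero 2 hq)]
  simp only [zCanonical, mul_smul_comm, smul_smul, smul_sub, smul_neg, ← sub_eq_add_neg,
    mul_assoc]
  simp only [← zpow_natCast, ← zpow_add₀ hq, ← zpow_one_add₀ hq]
  push_cast
  congr 3 <;> ring

theorem zCanonical_add_two (h : StraighteningRelations (qq ^ 2) x) (n : ℕ) :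
    zCanonical x (n + 2) = qq ^ (n + 1) • (xCanonical x (n + 1) * x 0)
      + qq • -(qq ^ 1 • (qq ^ (2 * (n + 1)) •
        ((qq ^ (3 * n) • (xCanonical x n * p₀ (qq ^ 2) x)) * x 1))) := by
  have hq := qq_ne_zero
  rw [zCanonical, h.zSeq_add_two_eq_xSeq (pow_ne_zero 2 hq)]
  simp only [xCanonical, smul_mul_assoc, smul_smul, smul_sub, smul_neg,
    ← sub_eq_add_neg, mul_assoc]
  simp only [← zpow_natCast, ← zpow_add₀ hq, ← zpow_one_add₀ hq, inv_zpow', ← zpow_mul]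
  push_cast
  congr 3 <;> ring

theorem hasLeadingTerm_xCanonical_succ (h : StraighteningRelations (qq ^ 2) x) {n : ℕ}
    (hz : HasLeadingTerm TriLT (pbw x) (n, 0, 0, n) (zCanonical x n))
    (hz' : HasLeadingTerm TriLT (pbw x) (n + 1, 0, 0, n + 1) (zCanonical x (n + 1))) :
    HasLeadingTerm TriLT (pbw x) (n + 2, 0, 0, n + 1) (xCanonical x (n + 1)) := by
  have hmem := h.x₂_mul_mem_intSpan (h.p₁_mul_mem_intSpan hz.mem_intSpan_tri)
  simp only [mul_zero, zero_add, add_zero] at hmem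
  rw [h.xCanonical_succ]
  exact (hasLeadingTerm_x₃_mul hz').add_of_mem_one_one (neg_mem hmem)

theorem hasLeadingTerm_zCanonical_add_two (h : StraighteningRelations (qq ^ 2) x) {n : ℕ}
    (hx : HasLeadingTerm TriLT (pbw x) (n + 1, 0, 0, n) (xCanonical x n))
    (hx' : HasLeadingTerm TriLT (pbw x) (n + 2, 0, 0, n + 1) (xCanonical x (n + 1))) :
    HasLeadingTerm TriLT (pbw x) (n + 2, 0, 0, n + 2) (zCanonical x (n + 2)) := by
  have hmem := h.mul_x₁_mem_intSpan (h.mul_p₀_mem_intSpan hx.mem_intSpan_tri)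
  simp only [mul_zero, zero_add, add_zero] at hmem
  rw [h.zCanonical_add_two]
  exact (hasLeadingTerm_mul_x₀ hx').add_of_mem_one_one
    (neg_mem (qq_pow_smul_mem_intSpan 1 hmem))

theorem hasLeadingTerm_zCanonical_xCanonical (h : StraighteningRelations (qq ^ 2) x) (n : ℕ) :
    HasLeadingTerm TriLT (pbw x) (n, 0, 0, n) (zCanonical x n) ∧
      HasLeadingTerm TriLT (pbw x) (n + 1, 0, 0, n) (xCanonical x n) ∧
      HasLeadingTerm TriLT (pbw x) (n + 1, 0, 0, n + 1) (zCanonical x (n + 1)) := by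
  induction n with
  | zero =>
    have hz : zCanonical x 0 = pbw x (0, 0, 0, 0) := by simp [zCanonical, pbw, bexp, zSeq]
    have hx : xCanonical x 0 = pbw x (1, 0, 0, 0) := by simp [xCanonical, pbw, bexp, xSeq]
    exact ⟨hz ▸ .self _ _ _, hx ▸ .self _ _ _, hasLeadingTerm_zCanonical_one⟩
  | succ n ih =>
    obtain ⟨hz, hx, hz'⟩ := ih
    have hx' := h.hasLeadingTerm_xCanonical_succ hz hz'
    exact ⟨hz', hx', h.hasLeadingTerm_zCanonical_add_two hx hx'⟩

end StraighteningRelations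

theorem IsTwistedBar.map_xCanonical {bar : F →+* F} {σ : R →ₛₗ[bar] R}
    (hbar : bar qq = qq⁻¹) (h : StraighteningRelations (qq ^ 2) x)
    (hσ : IsTwistedBar (qq ^ 2) x σ) (n : ℕ) :
    σ (xCanonical x n) = qq ^ (-Nnum (n + 1, 0, 0, n)) • xCanonical x n := by
  have hq := qq_ne_zero
  rw [xCanonical, map_smulₛₗ, hσ.map_xSeq (pow_ne_zero 2 hq) h, map_zpow₀, hbar, smul_smul,
    smul_smul]
  congr 1
  rw [inv_zpow', ← pow_mul, ← zpow_natCast, ← zpow_add₀ hq, ← zpow_add₀ hq, Nnum]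
  push_cast
  congr 1
  ring

theorem StraighteningRelations.xCanonical_mul (h : StraighteningRelations (qq ^ 2) x) (m : ℕ) :
    xCanonical x (m + 2) * xCanonical x m = qq ^ 2 • xCanonical x (m + 1) ^ 2
      + qq ^ (2 * (m + 2 : ℤ) ^ 2 - 6 * (m + 2) + 8) •
        (p₁ (qq ^ 2) x ^ (m + 3) * p₀ (qq ^ 2) x ^ m) := by
  have hq := qq_ne_zero
  have hcas : xSeq (qq ^ 2) x (m + 2) * xSeq (qq ^ 2) x m =
      (qq ^ 2)⁻¹ • xSeq (qq ^ 2) x (m + 1) ^ 2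
        + (qq ^ 2)⁻¹ ^ (m + 1) ^ 2 • (p₁ (qq ^ 2) x ^ (m + 3) * p₀ (qq ^ 2) x ^ m) :=
    sub_eq_iff_eq_add'.mp (h.casoratian_eq (pow_ne_zero 2 hq) m)
  simp only [xCanonical, pow_two (_ • xSeq _ _ _), smul_mul_smul_comm]
  rw [hcas, smul_add, smul_smul, smul_smul, smul_smul, pow_two (xSeq _ _ _)]
  simp only [← zpow_natCast, ← zpow_add₀ hq, ← zpow_mul, ← zpow_neg]
  push_cast
  congr 3 <;> ring

theorem IsTwistedBar.xCanonical_eq {bar : F →+* F} {σ : R →ₛₗ[bar] R} {B : Idx → R}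
    (hbar : bar qq = qq⁻¹) (h : StraighteningRelations (qq ^ 2) x)
    (hσ : IsTwistedBar (qq ^ 2) x σ) (hE : LinearIndependent F (pbw x))
    (hB : ∀ a, HasLeadingTerm TriLT (pbw x) a (B a))
    (hσB : ∀ a, σ (B a) = qq ^ (-Nnum a) • B a) (n : ℕ) :
    xCanonical x n = B (n + 1, 0, 0, n) := by
  have hweight (a b : Idx) (hab : TriLT a b) : qq ^ (-Nnum b) = qq ^ (-Nnum a) := by
    rw [Nnum_eq_of_tri hab.1]
  exact HasLeadingTerm.unique wellFounded_swap_triLT hE hbar hB hσB (zpow_ne_zero _ qq_ne_zero)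
    (hweight _) (h.hasLeadingTerm_zCanonical_xCanonical n).2.1 (hσ.map_xCanonical hbar h n)

end CanonicalElements

/-! ### The dual canonical basis of `Sgen` -/

section RootVectors

open Polynomial in
theorem eval₂_qq_ne_zero {p : ℤ[X]} (hp : p ≠ 0) : eval₂ (Int.castRingHom F) qq p ≠ 0 :=
  fun h ↦ hp (eval₂_qq_injective (h.trans (eval₂_zero _ _).symm))

open Polynomial in
theorem qq_sq_add_inv_ne_zero : qq ^ 2 + (qq ^ 2)⁻¹ ≠ 0 := by
  have hq := qq_ne_zero
  have hp : (X ^ 4 + 1 : ℤ[X]) ≠ 0 := fun h ↦ by simpa using congrArg (eval 0) h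
  have hclear : (qq ^ 2 + (qq ^ 2)⁻¹) * qq ^ 2 = eval₂ (Int.castRingHom F) qq (X ^ 4 + 1) := by
    rw [add_mul, inv_mul_cancel₀ (pow_ne_zero 2 hq), ← pow_add]
    simp
  exact left_ne_zero_of_mul (hclear ▸ eval₂_qq_ne_zero hp)

open Polynomial in
theorem qq_sq_add_one_add_inv_ne_zero : qq ^ 2 + 1 + (qq ^ 2)⁻¹ ≠ 0 := by
  have hq := qq_ne_zero
  have hp : (X ^ 4 + X ^ 2 + 1 : ℤ[X]) ≠ 0 := fun h ↦ by simpa using congrArg (eval 0) h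
  have hclear : (qq ^ 2 + 1 + (qq ^ 2)⁻¹) * qq ^ 2 =
      eval₂ (Int.castRingHom F) qq (X ^ 4 + X ^ 2 + 1) := by
    rw [add_mul, add_mul, inv_mul_cancel₀ (pow_ne_zero 2 hq), ← pow_add, one_mul]
    simp
  exact left_ne_zero_of_mul (hclear ▸ eval₂_qq_ne_zero hp)

theorem isQuantumSerre_E1_E2 : IsQuantumSerre (qq ^ 2) E1 E2 := by
  have hrel := RingQuot.mkAlgHom_rel F SerreRel.rel1
  simp only [map_add, map_sub, map_mul, map_smul, map_pow, map_zero] at hrel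
  rw [box3, inv_pow] at hrel
  exact hrel

theorem isQuantumSerre_E2_E1 : IsQuantumSerre (qq ^ 2) E2 E1 := by
  have hrel := RingQuot.mkAlgHom_rel F SerreRel.rel2
  simp only [map_add, map_sub, map_mul, map_smul, map_pow, map_zero] at hrel
  rw [box3, inv_pow] at hrel
  exact hrel

theorem Aelt_eq_smul_qBracket : Aelt = (qq + qq⁻¹)⁻¹ • qBracket (qq ^ 2) E2 E1 := by
  rw [Aelt, qBracket, inv_pow]

theorem straighteningRelations_u : StraighteningRelations (qq ^ 2) ![u0, u1, u2, u3] := by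
  have h := (isQuantumSerre_E1_E2.straighteningRelations (pow_ne_zero 2 qq_ne_zero)
    qq_sq_add_inv_ne_zero qq_sq_add_one_add_inv_ne_zero isQuantumSerre_E2_E1).pow_smul
    (((1 - qq⁻¹ ^ 2)⁻¹) ^ 2 * (qq + qq⁻¹)⁻¹)
  convert h using 1
  have hv (n : ℕ) (c : F) : ((c ^ 2 * (qq + qq⁻¹)⁻¹) ^ n) • adSeq (qBracket (qq ^ 2) E2 E1) E1 n
      = c ^ (2 * n) • adSeq Aelt E1 n := by
    rw [Aelt_eq_smul_qBracket, adSeq_smul, smul_smul, mul_pow, ← pow_mul]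
  funext i
  rw [hv]
  fin_cases i
  · simp [adSeq, u0, v0]
  · rfl
  · rfl
  · rfl

theorem straighteningRelations_us : StraighteningRelations (qq ^ 2) ![us0, us1, us2, us3] where
  one_zero := Subtype.ext straighteningRelations_u.one_zero
  two_one := Subtype.ext straighteningRelations_u.two_one
  three_two := Subtype.ext straighteningRelations_u.three_two
  two_zero := Subtype.ext straighteningRelations_u.two_zero
  three_one := Subtype.ext straighteningRelations_u.three_one
  three_zero := Subtype.ext straighteningRelations_u.three_zero

end RootVectors

section DualCanonicalBasis

variable {bar : F →+* F} {σ : Sgen → Sgen} {B : Idx → Sgen}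

theorem linearIndependent_Ee (hPBW : LinearIndependent F mon) : LinearIndependent F Ee :=
  hPBW.units_smul fun a ↦ Units.mk0 (qq ^ bexp a) (pow_ne_zero _ qq_ne_zero)

theorem hasLeadingTerm_of_cond1 {a : Idx} (hB : cond1 B a) : HasLeadingTerm TriLT Ee a (B a) := by
  obtain ⟨φ, hsupp, hsum⟩ := hB
  let c (b : Idx) : qPolynomials := ⟨Polynomial.eval₂ (Int.castRingHom F) qq (φ b), φ b, rfl⟩
  refine ⟨∑ b ∈ φ.support, c b • Ee b, sum_mem fun b hb ↦ ?_, ?_⟩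
  · exact Submodule.smul_mem _ _ (mem_intSpan (hsupp hb))
  · rw [← sub_eq_iff_eq_add', hsum, Finsupp.sum, Finset.smul_sum]
    exact Finset.sum_congr rfl fun b _ ↦ mul_smul _ _ _

/-- The map `σ` of `SigmaHyp`, bundled as a map semilinear over `bar`. -/
def semilinearMap (hσ : SigmaHyp bar σ) : Sgen →ₛₗ[bar] Sgen where
  toFun := σ
  map_add' := hσ.2.2.1
  map_smul' := hσ.2.2.2.2.1

theorem isTwistedBar_semilinearMap (hσ : SigmaHyp bar σ) :
    IsTwistedBar (qq ^ 2) ![us0, us1, us2, us3] (semilinearMap hσ) := by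
  have ⟨hbar, _, _, hmul, _, h₀, h₁, h₂, h₃⟩ := hσ
  have h₀' : σ us0 = qq ^ (2 * 0) • us0 := by rw [mul_zero, pow_zero, one_smul, h₀]
  refine ⟨by rw [map_pow, hbar, inv_pow], hmul, fun i ↦ ?_⟩
  rw [← pow_mul]
  fin_cases i
  exacts [h₀', h₁, h₂, h₃]

theorem B_eq_xCanonical (hPBW : LinearIndependent F mon) (hσ : SigmaHyp bar σ)
    (hB : DCB bar σ B) (n : ℕ) : B (n + 1, 0, 0, n) = xCanonical ![us0, us1, us2, us3] n := by
  have hpbw : ∀ a, HasLeadingTerm TriLT (pbw ![us0, us1, us2, us3]) a (B a) :=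
    fun a ↦ hasLeadingTerm_of_cond1 (hB a).1
  have hσB : ∀ a, semilinearMap hσ (B a) = qq ^ (-Nnum a) • B a := fun a ↦ (hB a).2
  exact ((isTwistedBar_semilinearMap hσ).xCanonical_eq hσ.1 straighteningRelations_us
    (linearIndependent_Ee hPBW) hpbw hσB n).symm

theorem Bz_natCast (B : Idx → Sgen) (a b c d : ℕ) : Bz B (a, b, c, d) = B (a, b, c, d) := by
  simp [Bz]

theorem Bz_eq_xCanonical (hPBW : LinearIndependent F mon) (hσ : SigmaHyp bar σ)
    (hB : DCB bar σ B) {i j : ℤ} (n : ℕ) (hi : i = n + 1) (hj : j = n) :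
    Bz B (i, 0, 0, j) = xCanonical ![us0, us1, us2, us3] n := by
  rw [hi, hj, ← B_eq_xCanonical hPBW hσ hB n]
  exact_mod_cast Bz_natCast B (n + 1) 0 0 n

end DualCanonicalBasis

end QuantumKronecker

/-- For every integer `n ≥ 2` the quantum exchange relation
`B[n+1,0,0,n]·B[n−1,0,0,n−2] = q² · B[n,0,0,n−1]² + q^{2n²−6n+8} p₁^{n+1} p₀^{n−2}` holds. -/
theorem stmt16 (bar : F →+* F) (σ : Sgen → Sgen) (B : Idx → Sgen)
    (hPBW : LinearIndependent F mon) (hσ : SigmaHyp bar σ) (hB : DCB bar σ B) (n : ℕ) (hn : 2 ≤ n) :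
    Bz B ((n : ℤ) + 1, 0, 0, (n : ℤ)) * Bz B ((n : ℤ) - 1, 0, 0, (n : ℤ) - 2)
        = qq ^ 2 • (Bz B ((n : ℤ), 0, 0, (n : ℤ) - 1)) ^ 2
          + qq ^ (2 * (n : ℤ) ^ 2 - 6 * (n : ℤ) + 8) • (ps1 ^ (n + 1) * ps0 ^ (n - 2)) := by
  obtain ⟨m, rfl⟩ := Nat.exists_eq_add_of_le' hn
  have hBz {i j : ℤ} := QuantumKronecker.Bz_eq_xCanonical hPBW hσ hB (i := i) (j := j)
  rw [hBz (m + 2) rfl rfl, hBz m (by push_cast; ring) (by push_cast; ring),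
    hBz (m + 1) (by push_cast; ring) (by push_cast; ring), Nat.add_sub_cancel]
  exact_mod_cast QuantumKronecker.straighteningRelations_us.xCanonical_mul m
end
end
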